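/- arXiv:math/0404514 — 13 statements merged into one kernel-verified Lean document; each statement's English description precedes it below -/
import Mathlib

section
/- Let m₁, m₂, m₃ > 0 be real numbers, σ a permutation of {1,2,3} such that m_{σ(i)} = m_i for all i, A a 2×2 real orthogonal matrix, ε ∈ {−1, 1}, and s ∈ ℝ, with ε · det(A) = −1. Suppose x = (x₁, x₂, x₃) : ℝ → (ℝ²)³ is differentiable, satisfies x_i(εt + s) = A · x_{σ⁻¹(i)}(t) for all i ∈ {1,2,3} and all t ∈ ℝ, and its angular momentum J(t) = Σ_{i=1}^{3} m_i (x_i(t) × x_i'(t)) is constant in t. Then J(t) = 0 for all t ∈ ℝ. -/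
/-!
The cross product satisfies `cross2 (A u) (A v) = det A * cross2 u v`. Differentiating the symmetry
relation in `t` gives `ε x'_i(εt + s) = A x'_{σ⁻¹ i}(t)`, so crossing it with the original relation
and summing over the bodies, whose masses are `σ`-invariant, yields `ε J(εt + s) = det A * J(t)`.
As `ε² = 1` and `ε * det A = -1`, this says `J(εt + s) = -J(t)`; a constant `J` therefore vanishes.
-/

open Real Matrix

/-- Planar cross product of two vectors in `ℝ²` (given as `Fin 2 → ℝ`). -/
def cross2 (u v : Fin 2 → ℝ) : ℝ := u 0 * v 1 - u 1 * v 0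

theorem cross2_mulVec (A : Matrix (Fin 2) (Fin 2) ℝ) (u v : Fin 2 → ℝ) :
    cross2 (A.mulVec u) (A.mulVec v) = A.det * cross2 u v := by
  simp only [cross2, Matrix.mulVec, dotProduct, Fin.sum_univ_two, Matrix.det_fin_two]
  ring

theorem cross2_smul_right (c : ℝ) (u v : Fin 2 → ℝ) :
    cross2 u (c • v) = c * cross2 u v := by
  simp only [cross2, Pi.smul_apply, smul_eq_mul]
  ring

theorem angular_momentum_vanishes_not_typeR
    (m : Fin 3 → ℝ) (hm : ∀ i, 0 < m i)
    (σ : Equiv.Perm (Fin 3)) (hσm : ∀ i, m (σ i) = m i)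
    (A : Matrix (Fin 2) (Fin 2) ℝ) (hA : A * Aᵀ = 1)
    (ε : ℝ) (hε : ε = -1 ∨ ε = 1) (s : ℝ)
    (hdet : ε * A.det = -1)
    (x x' : ℝ → Fin 3 → Fin 2 → ℝ)
    (hderiv : ∀ i j t, HasDerivAt (fun u => x u i j) (x' t i j) t)
    (hequiv : ∀ i t, x (ε * t + s) i = A.mulVec (x t (σ⁻¹ i)))
    (J : ℝ → ℝ)
    (hJ : ∀ t, J t = ∑ i, m i * cross2 (x t i) (x' t i))
    (hconst : ∀ t t' : ℝ, J t = J t') :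
    ∀ t, J t = 0 := by
  have hvel : ∀ i t, ε • x' (ε * t + s) i = A.mulVec (x' t (σ⁻¹ i)) := by
    intro i t
    funext j
    have hinner : HasDerivAt (fun u : ℝ => ε * u + s) ε t := by
      simpa using ((hasDerivAt_id t).const_mul ε).add_const s
    have hL : HasDerivAt (fun u => x (ε * u + s) i j) (x' (ε * t + s) i j * ε) t :=
      HasDerivAt.comp (h₂ := fun u => x u i j) t (hderiv i j (ε * t + s)) hinner
    have hR : HasDerivAt (fun u => A.mulVec (x u (σ⁻¹ i)) j) (A.mulVec (x' t (σ⁻¹ i)) j) t := by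
      simp only [Matrix.mulVec, dotProduct, Fin.sum_univ_two]
      exact ((hderiv (σ⁻¹ i) 0 t).const_mul (A j 0)).add ((hderiv (σ⁻¹ i) 1 t).const_mul (A j 1))
    have hfun : (fun u => x (ε * u + s) i j) = fun u => A.mulVec (x u (σ⁻¹ i)) j :=
      funext fun u => congrFun (hequiv i u) j
    rw [hfun] at hL
    rw [Pi.smul_apply, smul_eq_mul, mul_comm]
    exact hL.unique hR
  have hmain : ∀ t, ε * J (ε * t + s) = A.det * J t := by
    intro t
    rw [hJ, hJ, Finset.mul_sum, Finset.mul_sum]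
    refine (Equiv.sum_comp σ _).symm.trans (Finset.sum_congr rfl fun i _ => ?_)
    have hx := hequiv (σ i) t
    have hv := hvel (σ i) t
    rw [show σ⁻¹ (σ i) = i from σ.symm_apply_apply i] at hx hv
    rw [hσm, mul_left_comm, ← cross2_smul_right, hx, hv, cross2_mulVec]
    ring
  have hsq : ε * ε = 1 := by rcases hε with rfl | rfl <;> norm_num
  intro t
  have h := hmain t
  rw [hconst (ε * t + s) t] at h
  linear_combination (1 / 2) * ε * h - (1 / 2) * J t * hsq + (1 / 2) * J t * hdet
end

section
/- Let ω ∈ ℝ and let x : ℝ → ℂ be a continuously differentiable 2π-periodic function. Then ∫₀^{2π} |x'(t) − iω x(t)|² dt ≥ c(ω) · ∫₀^{2π} |x(t)|² dt, where c(ω) = min_{n ∈ ℤ} (n − ω)² (this minimum over the integers exists and is attained at an integer nearest to ω). -/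
/-!
The operator `x ↦ x' - iωx` is diagonal in the Fourier basis of `[0, 2π]`: since `x` is periodic,
integrating by parts shows that it multiplies the `n`-th Fourier coefficient by `i(n - ω)`
(`fourierCoeffOn_deriv_sub`). By Parseval, both integrals are `2π` times the sum of the squared
norms of the coefficients, so the estimate follows term by term from
`(round ω - ω)² ≤ (n - ω)²`, the fact that `round ω` is an integer nearest to `ω`.
-/

open Real

/-- The operator `x ↦ x' - iωx` acts on the `n`-th Fourier coefficient of a `2π`-periodic `C¹`
function as multiplication by `i(n - ω)`. -/
theorem fourierCoeffOn_deriv_sub (ω : ℝ) (x : ℝ → ℂ) (hx : ContDiff ℝ 1 x)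
    (hper : Function.Periodic x (2 * π)) (h : (0 : ℝ) < 2 * π) (n : ℤ) :
    fourierCoeffOn h (fun t => deriv x t - Complex.I * (ω : ℂ) * x t) n
      = Complex.I * ((n : ℂ) - ω) * fourierCoeffOn h x n := by
  rw [fourierCoeffOn_eq_integral, fourierCoeffOn_eq_integral, mul_smul_comm]
  congr 1
  set e : ℝ → ℂ := fun t => fourier (-n) (t : AddCircle (2 * π - 0)) with he
  have hde : ∀ t, HasDerivAt e (-(Complex.I * n) * e t) t := by
    intro t
    convert! hasDerivAt_fourier_neg (2 * π - 0) n t using 1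
    have hpi : (π : ℂ) ≠ 0 := by exact_mod_cast pi_ne_zero
    simp only [he, sub_zero]
    push_cast
    field_simp
  have hec : Continuous e := continuous_iff_continuousAt.2 fun t => (hde t).continuousAt
  have hdx : ∀ t, HasDerivAt x (deriv x t) t := fun t =>
    (hx.differentiable one_ne_zero t).hasDerivAt
  have hxc : Continuous x := hx.continuous
  have hdc : Continuous (deriv x) := hx.continuous_deriv le_rfl
  have hparts := intervalIntegral.integral_deriv_mul_eq_sub (a := 0) (b := 2 * π)
    (fun t _ => hde t) (fun t _ => hdx t)
    ((by fun_prop : Continuous fun t => -(Complex.I * n) * e t).intervalIntegrable _ _)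
    (hdc.intervalIntegrable _ _)
  have hx0 : x (2 * π) = x 0 := by simpa using hper 0
  have he0 : e (2 * π) = e 0 := by
    simp only [he]
    congr 1
    simp
  rw [hx0, he0, sub_self] at hparts
  rw [← intervalIntegral.integral_const_mul, ← sub_eq_zero,
    ← intervalIntegral.integral_sub, ← hparts]
  · congr 1
    ext t
    simp only [smul_eq_mul, he]
    ring
  · exact (by fun_prop : Continuous fun t =>
      e t • (deriv x t - Complex.I * (ω : ℂ) * x t)).intervalIntegrable _ _
  · exact (by fun_prop : Continuous fun t =>
      Complex.I * ((n : ℂ) - ω) * (e t • x t)).intervalIntegrable _ _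

theorem memLp_two_of_continuous {f : ℝ → ℂ} (hf : Continuous f) (a b : ℝ) :
    MeasureTheory.MemLp f 2 (MeasureTheory.volume.restrict (Set.Ioc a b)) := by
  obtain ⟨C, hC⟩ := isCompact_Icc.exists_bound_of_continuousOn (hf.continuousOn (s := Set.Icc a b))
  refine MeasureTheory.MemLp.of_bound hf.aestronglyMeasurable C ?_
  filter_upwards [MeasureTheory.ae_restrict_mem measurableSet_Ioc] with t ht
  exact hC t (Set.Ioc_subset_Icc_self ht)

theorem kinetic_fourier_estimate
    (ω : ℝ) (x : ℝ → ℂ) (hx : ContDiff ℝ 1 x)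
    (hper : Function.Periodic x (2 * π)) :
    (((round ω : ℝ) - ω) ^ 2 * ∫ t in (0:ℝ)..(2 * π), ‖x t‖ ^ 2) ≤
        (∫ t in (0:ℝ)..(2 * π), ‖deriv x t - Complex.I * (ω : ℂ) * x t‖ ^ 2) ∧
      ∀ n : ℤ, ((round ω : ℝ) - ω) ^ 2 ≤ ((n : ℝ) - ω) ^ 2 := by
  have hmin : ∀ n : ℤ, ((round ω : ℝ) - ω) ^ 2 ≤ ((n : ℝ) - ω) ^ 2 := fun n => by
    rw [sq_le_sq, abs_sub_comm _ ω, abs_sub_comm _ ω]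
    exact round_le ω n
  refine ⟨?_, hmin⟩
  have h : (0 : ℝ) < 2 * π := by positivity
  have hxc : Continuous x := hx.continuous
  have hdc : Continuous (deriv x) := hx.continuous_deriv le_rfl
  have hsx := hasSum_sq_fourierCoeffOn h (memLp_two_of_continuous hxc 0 (2 * π))
  have hsg := hasSum_sq_fourierCoeffOn h (memLp_two_of_continuous
    (by fun_prop : Continuous fun t => deriv x t - Complex.I * (ω : ℂ) * x t) 0 (2 * π))
  have hle := hasSum_le (fun n => ?_) (hsx.mul_left (((round ω : ℝ) - ω) ^ 2)) hsg
  · rw [smul_eq_mul, smul_eq_mul, mul_left_comm] at hle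
    exact le_of_mul_le_mul_left hle (by rw [sub_zero]; positivity)
  · rw [fourierCoeffOn_deriv_sub ω x hx hper h n, norm_mul, mul_pow]
    have hnorm : ‖Complex.I * ((n : ℂ) - ω)‖ ^ 2 = ((n : ℝ) - ω) ^ 2 := by
      rw [norm_mul, Complex.norm_I, one_mul, ← sq_abs ((n : ℝ) - ω), ← Real.norm_eq_abs,
        ← Complex.norm_real]
      push_cast
      rfl
    rw [hnorm]
    exact mul_le_mul_of_nonneg_right (hmin n) (sq_nonneg _)
end

section
/- For every ω ∈ [0, 1/2], one has (146/25)·ω − 2 + (25/2)^{1/3}·(1 − ω)^{−1/3} > 0. Moreover, the function ω ↦ (146/25)·ω − 2 + (25/2)^{1/3}·(1 − ω)^{−1/3} is strictly increasing on [0, 1/2]. -/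
open Real

/-- `8 < 25 / 2`, so the cube root of `25 / 2` exceeds `2`. -/
lemma two_lt_cbrt : (2:ℝ) < (25 / 2 : ℝ) ^ ((1:ℝ) / 3) := by
  have h : ((2:ℝ) ^ (3:ℝ)) ^ ((1:ℝ) / 3) = 2 := by
    rw [← Real.rpow_mul (by norm_num)]
    norm_num
  calc (2:ℝ) = ((2:ℝ) ^ (3:ℝ)) ^ ((1:ℝ) / 3) := h.symm
    _ < _ := Real.rpow_lt_rpow (by positivity) (by norm_num) (by norm_num)

theorem hill_euler_difference_derivative_positive :
    (∀ ω ∈ Set.Icc (0:ℝ) (1 / 2),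
        0 < (146 / 25) * ω - 2 + (25 / 2 : ℝ) ^ ((1:ℝ) / 3) * (1 - ω) ^ (-(1:ℝ) / 3)) ∧
      StrictMonoOn
        (fun ω : ℝ => (146 / 25) * ω - 2 + (25 / 2 : ℝ) ^ ((1:ℝ) / 3) * (1 - ω) ^ (-(1:ℝ) / 3))
        (Set.Icc (0:ℝ) (1 / 2)) := by
  have hc := two_lt_cbrt
  constructor
  · -- The linear term is nonnegative and `(1 - ω) ^ (-1/3) ≥ 1`.
    rintro ω ⟨h0, h1⟩
    have h := Real.one_le_rpow_of_pos_of_le_one_of_nonpos (x := 1 - ω) (z := -(1:ℝ) / 3)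
      (by linarith) (by linarith) (by norm_num)
    nlinarith
  · -- The linear term is strictly increasing and `(1 - ω) ^ (-1/3)` is nondecreasing.
    rintro a ⟨ha0, ha1⟩ b ⟨hb0, hb1⟩ hab
    have h := Real.rpow_le_rpow_of_nonpos (x := 1 - b) (y := 1 - a) (z := -(1:ℝ) / 3)
      (by linarith) (by linarith) (by norm_num)
    have h' := mul_le_mul_of_nonneg_left h (by linarith : (0:ℝ) ≤ (25 / 2 : ℝ) ^ ((1:ℝ) / 3))
    dsimp only
    linarith
end

section
/- Let α ∈ (0, 2) and θ ∈ (0, 2π). Then the function t ↦ (t^{4/(α+2)} − 2 cos θ · t^{2/(α+2)} + 1)^{−α/2} − t^{−2α/(α+2)} is Lebesgue integrable on (0, ∞). -/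
open Real MeasureTheory

/-!
Put `s = t ^ (2 / (α + 2))` and `P = s ^ 2 - 2 s cos θ + 1`, so that the integrand is
`P ^ (-(α / 2)) - s ^ (-α)`. Since `cos θ < 1`, the quadratic satisfies
`P ≥ k (1 + s) ^ 2` with `k = (1 - cos θ) / 2 > 0` (`quadratic_lower_bound`).

On `(0, 1]` the first term is therefore continuous up to the endpoint `0`, and the second is an
integrable power of `t` because `2 α / (α + 2) < 1`, that is, `α < 2`.

On `(1, ∞)` both `P` and `s ^ 2` are at least `k s ^ 2` and `|P - s ^ 2| ≤ 3 s`, so the mean value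
theorem for `x ↦ x ^ (-(α / 2))` (`abs_rpow_neg_sub_le`) bounds the difference by a constant
multiple of `(s ^ 2) ^ (-(α / 2) - 1) * s = t ^ (-(2 (α + 1) / (α + 2)))`, which is integrable at
infinity because `2 (α + 1) / (α + 2) > 1`, that is, `α > 0`.
-/

/-- The identity behind this is
`s ^ 2 - 2 c s + 1 = (1 - c) / 2 * (1 + s) ^ 2 + (1 + c) / 2 * (1 - s) ^ 2`. -/
lemma quadratic_lower_bound {c : ℝ} (hc : -1 ≤ c) (s : ℝ) :
    (1 - c) / 2 * (1 + s) ^ 2 ≤ s ^ 2 - 2 * c * s + 1 := by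
  nlinarith [mul_nonneg (by linarith : (0:ℝ) ≤ 1 + c) (sq_nonneg (1 - s))]

/-- The mean value inequality for `x ↦ x ^ (-a)` on `[m, ∞)`, where its derivative is largest
in absolute value at `m`. -/
lemma abs_rpow_neg_sub_le {a m x y : ℝ} (ha : 0 ≤ a) (hm : 0 < m) (hx : m ≤ x) (hy : m ≤ y) :
    |x ^ (-a) - y ^ (-a)| ≤ a * m ^ (-a - 1) * |x - y| := by
  have h := (convex_Ici m).norm_image_sub_le_of_norm_hasDerivWithin_le
    (f := fun z : ℝ => z ^ (-a)) (f' := fun z : ℝ => -a * z ^ (-a - 1))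
    (C := a * m ^ (-a - 1)) (x := y) (y := x) ?_ ?_ hy hx
  · simpa [Real.norm_eq_abs] using h
  · intro z hz
    have hz0 : 0 < z := hm.trans_le hz
    exact (Real.hasDerivAt_rpow_const (Or.inl hz0.ne')).hasDerivWithinAt
  · intro z hz
    have hz0 : 0 < z := hm.trans_le hz
    rw [norm_mul, Real.norm_eq_abs, Real.norm_eq_abs, abs_neg, abs_of_nonneg ha,
      abs_of_nonneg (Real.rpow_nonneg hz0.le _)]
    exact mul_le_mul_of_nonneg_left
      (Real.rpow_le_rpow_of_nonpos hm hz (by linarith)) ha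

theorem phi_integrand_integrable
    (α : ℝ) (hα : α ∈ Set.Ioo (0:ℝ) 2) (θ : ℝ) (hθ : θ ∈ Set.Ioo (0:ℝ) (2 * π)) :
    IntegrableOn
      (fun t : ℝ =>
        (t ^ (4 / (α + 2)) - 2 * Real.cos θ * t ^ (2 / (α + 2)) + 1) ^ (-(α / 2)) -
          t ^ (-(2 * α / (α + 2))))
      (Set.Ioi (0:ℝ)) := by
  obtain ⟨h0, h2⟩ := hα
  have hp : 0 < α + 2 := by linarith
  have hc1 : Real.cos θ < 1 := by
    refine lt_of_le_of_ne (Real.cos_le_one θ) fun h => ?_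
    have := (Real.cos_eq_one_iff_of_lt_of_lt (by linarith [hθ.1, Real.pi_pos]) hθ.2).1 h
    exact hθ.1.ne' this
  have hcm := Real.neg_one_le_cos θ
  set c := Real.cos θ with hc
  have hk : 0 < (1 - c) / 2 := by linarith
  have hsq : ∀ t : ℝ, 0 ≤ t → t ^ (4 / (α + 2)) = (t ^ (2 / (α + 2))) ^ 2 := by
    intro t ht
    rw [← Real.rpow_natCast, ← Real.rpow_mul ht]
    congr 1
    push_cast
    ring
  have hlow : ∀ t : ℝ, 0 ≤ t → (1 - c) / 2 * (1 + t ^ (2 / (α + 2))) ^ 2 ≤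
      t ^ (4 / (α + 2)) - 2 * c * t ^ (2 / (α + 2)) + 1 := by
    intro t ht
    rw [hsq t ht]
    exact quadratic_lower_bound hcm _
  have hpos : ∀ t : ℝ, 0 ≤ t →
      0 < t ^ (4 / (α + 2)) - 2 * c * t ^ (2 / (α + 2)) + 1 := by
    intro t ht
    have := Real.rpow_nonneg ht (2 / (α + 2))
    exact lt_of_lt_of_le (by positivity) (hlow t ht)
  have hcont : ContinuousOn (fun t : ℝ =>
      (t ^ (4 / (α + 2)) - 2 * c * t ^ (2 / (α + 2)) + 1) ^ (-(α / 2))) (Set.Ici 0) := by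
    refine ContinuousOn.rpow_const ?_ fun t ht => Or.inl (hpos t ht).ne'
    have c4 : Continuous fun t : ℝ => t ^ (4 / (α + 2)) :=
      Real.continuous_rpow_const (by positivity)
    have c2 : Continuous fun t : ℝ => t ^ (2 / (α + 2)) :=
      Real.continuous_rpow_const (by positivity)
    exact (by fun_prop : Continuous fun t : ℝ =>
      t ^ (4 / (α + 2)) - 2 * c * t ^ (2 / (α + 2)) + 1).continuousOn
  rw [← Set.Ioc_union_Ioi_eq_Ioi (zero_le_one (α := ℝ)), integrableOn_union]
  constructor
  · refine Integrable.sub ?_ ?_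
    · exact ((hcont.mono Set.Icc_subset_Ici_self).integrableOn_Icc).mono_set
        Set.Ioc_subset_Icc_self
    · have hexp : -1 < -(2 * α / (α + 2)) := by
        rw [neg_lt_neg_iff, div_lt_one hp]
        linarith
      exact (intervalIntegrable_iff_integrableOn_Ioc_of_le zero_le_one).1
        (intervalIntegral.intervalIntegrable_rpow' hexp)
  · have hexp : -(2 * (α + 1) / (α + 2)) < -1 := by
      rw [neg_lt_neg_iff, one_lt_div hp]
      linarith
    refine Integrable.mono' ((integrableOn_Ioi_rpow_of_lt hexp zero_lt_one).const_mul
      (α / 2 * ((1 - c) / 2) ^ (-(α / 2) - 1) * 3)) ?_ ?_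
    · refine ContinuousOn.aestronglyMeasurable ?_ measurableSet_Ioi
      refine (hcont.mono (Set.Ioi_subset_Ici zero_le_one)).sub ?_
      exact continuousOn_id.rpow_const fun t ht => Or.inl (zero_lt_one.trans (Set.mem_Ioi.1 ht)).ne'
    · refine (ae_restrict_iff' measurableSet_Ioi).2 (ae_of_all _ fun t ht => ?_)
      have ht1 : 1 < t := ht
      have ht0 : 0 < t := zero_lt_one.trans ht1
      have hs1 : 1 ≤ t ^ (2 / (α + 2)) := Real.one_le_rpow ht1.le (by positivity)
      have hl := hlow t ht0.le
      have h4 := hsq t ht0.le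
      have hsecond : t ^ (-(2 * α / (α + 2))) = (t ^ (4 / (α + 2))) ^ (-(α / 2)) := by
        rw [← Real.rpow_mul ht0.le]
        congr 1
        field_simp
        ring
      have hpow : (t ^ (4 / (α + 2))) ^ (-(α / 2) - 1) * t ^ (2 / (α + 2)) =
          t ^ (-(2 * (α + 1) / (α + 2))) := by
        rw [← Real.rpow_mul ht0.le, ← Real.rpow_add ht0]
        congr 1
        field_simp
        ring
      have h4pos : 0 < t ^ (4 / (α + 2)) := Real.rpow_pos_of_pos ht0 _
      rw [Real.norm_eq_abs, hsecond]
      have hmvt := abs_rpow_neg_sub_le (a := α / 2) (m := (1 - c) / 2 * t ^ (4 / (α + 2)))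
        (x := t ^ (4 / (α + 2)) - 2 * c * t ^ (2 / (α + 2)) + 1) (y := t ^ (4 / (α + 2)))
        (by positivity) (by positivity)
        (le_trans (mul_le_mul_of_nonneg_left (by rw [h4]; nlinarith) hk.le) hl)
        (by nlinarith)
      have hdiff : |t ^ (4 / (α + 2)) - 2 * c * t ^ (2 / (α + 2)) + 1 - t ^ (4 / (α + 2))| ≤
          3 * t ^ (2 / (α + 2)) := by
        rw [abs_le]
        constructor <;> nlinarith
      refine hmvt.trans ((mul_le_mul_of_nonneg_left hdiff (by positivity)).trans_eq ?_)
      rw [← hpow, Real.mul_rpow hk.le h4pos.le]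
      ring
end

section
/- Let α ∈ (0, 2). Then the function Φ_α satisfies: (i) Φ_α(θ) = Φ_α(2π − θ) for every θ ∈ (0, 2π); (ii) Φ_α is strictly decreasing on (0, π], i.e. for 0 < θ₁ < θ₂ ≤ π one has Φ_α(θ₂) < Φ_α(θ₁). In particular Φ_α attains its minimal value over (0, 2π) at θ = π. -/
/-!
The symmetry of `Phi` is that of the cosine. For monotonicity, write `u = t ^ (2 / (α + 2))`: the
base `u ^ 2 - 2 * cos θ * u + 1` strictly increases with `θ ∈ (0, π]` for each fixed `t > 0`, so
the integrand strictly decreases pointwise, and so does the integral once the integrands are known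
to be integrable (`integrableOn_phiIntegrand`).

Integrability rests on the bound `m * (u ^ 2 + 1) ≤ u ^ 2 - 2 * cos θ * u + 1` for some `m > 0`
(`exists_base_lower_bound`). On `(0, 1]` it bounds the first term by a constant, while the second
term is a power of `t` with exponent greater than `-1` because `α < 2`. On `(1, ∞)` the mean value
theorem applied to `x ↦ x ^ (-(α / 2))` between `u ^ 2` and the base (`abs_rpow_sub_rpow_le`) bounds
the difference by a multiple of `u ^ (-(α + 1))`, a power of `t` with exponent less than `-1`.
-/

open Real MeasureTheory

/-- The function `Φ_α` from the parabolic-collision variational estimates. -/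
noncomputable def Phi (α θ : ℝ) : ℝ :=
  ∫ t in Set.Ioi (0:ℝ),
    ((t ^ (4 / (α + 2)) - 2 * Real.cos θ * t ^ (2 / (α + 2)) + 1) ^ (-(α / 2)) -
      t ^ (-(2 * α / (α + 2))))

/-- The integrand of `Phi α θ`. -/
noncomputable def phiIntegrand (α θ t : ℝ) : ℝ :=
  (t ^ (4 / (α + 2)) - 2 * Real.cos θ * t ^ (2 / (α + 2)) + 1) ^ (-(α / 2)) -
    t ^ (-(2 * α / (α + 2)))

/-- For `c < 1` the base is at least a fixed positive multiple of `u ^ 2 + 1` on `u ≥ 0`: one may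
take `m = 1` when `c ≤ 0`, and `m = 1 - c` otherwise since `2 * u ≤ u ^ 2 + 1`. -/
lemma exists_base_lower_bound {c : ℝ} (hc : c < 1) :
    ∃ m : ℝ, 0 < m ∧ m ≤ 1 ∧ ∀ u : ℝ, 0 ≤ u → m * (u ^ 2 + 1) ≤ u ^ 2 - 2 * c * u + 1 := by
  rcases le_total c 0 with h | h
  · exact ⟨1, one_pos, le_rfl, fun u hu => by nlinarith [mul_nonneg (neg_nonneg.2 h) hu]⟩
  · exact ⟨1 - c, by linarith, by linarith, fun u hu => by
      nlinarith [mul_nonneg h (sq_nonneg (u - 1))]⟩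

/-- The mean value inequality for `x ↦ x ^ (-p)` on `[a, ∞)`, where its derivative is largest in
absolute value at `a`. -/
lemma abs_rpow_sub_rpow_le {p a x y : ℝ} (hp : 0 < p) (ha : 0 < a) (hx : a ≤ x) (hy : a ≤ y) :
    |y ^ (-p) - x ^ (-p)| ≤ p * a ^ (-p - 1) * |y - x| := by
  have := (convex_Ici a).norm_image_sub_le_of_norm_hasDerivWithin_le
    (f := fun x : ℝ => x ^ (-p)) (f' := fun x => (-p) * x ^ (-p - 1)) (C := p * a ^ (-p - 1))
    (x := x) (y := y)
    (fun z hz => (Real.hasDerivAt_rpow_const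
      (Or.inl (lt_of_lt_of_le ha hz).ne')).hasDerivWithinAt)
    (fun z hz => by
      have hz0 : 0 < z := lt_of_lt_of_le ha hz
      rw [Real.norm_eq_abs, abs_mul, abs_neg, abs_of_pos hp, abs_of_pos (by positivity)]
      exact mul_le_mul_of_nonneg_left
        (Real.rpow_le_rpow_of_nonpos ha hz (by linarith)) hp.le)
    hx hy
  simpa [Real.norm_eq_abs] using this

lemma rpow_four_div {α t : ℝ} (ht : 0 < t) :
    t ^ (4 / (α + 2)) = (t ^ (2 / (α + 2))) ^ 2 := by
  rw [← Real.rpow_natCast, ← Real.rpow_mul ht.le]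
  congr 1
  push_cast
  ring

lemma integrableOn_phiIntegrand {α θ : ℝ} (h0 : 0 < α) (h2 : α < 2) (hθ : Real.cos θ < 1) :
    IntegrableOn (phiIntegrand α θ) (Set.Ioi 0) := by
  obtain ⟨m, hm, hm1, hbase⟩ := exists_base_lower_bound hθ
  have hmeas : Measurable (phiIntegrand α θ) := by
    unfold phiIntegrand
    fun_prop
  rw [← Set.Ioc_union_Ioi_eq_Ioi (zero_le_one' ℝ), integrableOn_union]
  constructor
  · unfold phiIntegrand
    refine Integrable.sub ?_ ?_
    · refine Measure.integrableOn_of_bounded (M := m ^ (-(α / 2))) (by simp) ?_ ?_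
      · exact Measurable.aestronglyMeasurable (by fun_prop)
      · refine (ae_restrict_mem measurableSet_Ioc).mono fun t ht => ?_
        have hu := Real.rpow_nonneg ht.1.le (2 / (α + 2))
        have hb := hbase _ hu
        rw [← rpow_four_div ht.1] at hb
        have hmb : m ≤ t ^ (4 / (α + 2)) - 2 * Real.cos θ * t ^ (2 / (α + 2)) + 1 := by
          have := Real.rpow_nonneg ht.1.le (4 / (α + 2))
          nlinarith [mul_nonneg hm.le this]
        rw [Real.norm_eq_abs, abs_of_nonneg (Real.rpow_nonneg (hm.le.trans hmb) _)]
        exact Real.rpow_le_rpow_of_nonpos hm hmb (by linarith)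
    · have : -1 < -(2 * α / (α + 2)) := by
        have : 2 * α / (α + 2) < 1 := by
          rw [div_lt_one (by linarith)]
          linarith
        linarith
      have h := intervalIntegral.intervalIntegrable_rpow' (a := 0) (b := 1) this
      rwa [intervalIntegrable_iff_integrableOn_Ioc_of_le zero_le_one] at h
  · have hexp : -(2 / (α + 2) * (α + 1)) < -1 := by
      have : 1 < 2 / (α + 2) * (α + 1) := by
        rw [div_mul_eq_mul_div, one_lt_div (by linarith)]
        linarith
      linarith
    have hdom := (integrableOn_Ioi_rpow_of_lt hexp one_pos).const_mul
      (α / 2 * m ^ (-(α / 2) - 1) * 3)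
    refine Integrable.mono' hdom hmeas.aestronglyMeasurable ?_
    refine (ae_restrict_mem measurableSet_Ioi).mono fun t ht => ?_
    have ht1 : (1:ℝ) < t := ht
    have ht0 : (0:ℝ) < t := by linarith
    have hu1 : 1 ≤ t ^ (2 / (α + 2)) := Real.one_le_rpow ht1.le (by positivity)
    have hpow : t ^ (-(2 / (α + 2) * (α + 1))) = (t ^ (2 / (α + 2))) ^ (-(α + 1)) := by
      rw [← Real.rpow_mul ht0.le]
      congr 1
      ring
    have hpow2 : t ^ (-(2 * α / (α + 2))) = ((t ^ (2 / (α + 2))) ^ 2) ^ (-(α / 2)) := by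
      rw [← rpow_four_div ht0, ← Real.rpow_mul ht0.le]
      congr 1
      ring
    rw [phiIntegrand, hpow, hpow2, rpow_four_div ht0, Real.norm_eq_abs]
    generalize t ^ (2 / (α + 2)) = u at hu1
    have hu0 : 0 < u := by linarith
    have hb := hbase u hu0.le
    -- Both `u ^ 2` and the base are at least `m * u ^ 2`.
    have hmvt := abs_rpow_sub_rpow_le (p := α / 2) (a := m * u ^ 2) (x := u ^ 2)
      (y := u ^ 2 - 2 * Real.cos θ * u + 1) (by linarith) (by positivity)
      (by nlinarith [sq_nonneg u]) (by nlinarith)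
    refine hmvt.trans ?_
    have habs : |u ^ 2 - 2 * Real.cos θ * u + 1 - u ^ 2| ≤ 3 * u := by
      have := Real.neg_one_le_cos θ
      rw [abs_le]
      constructor <;> nlinarith
    have hsplit : (m * u ^ 2) ^ (-(α / 2) - 1) * u = m ^ (-(α / 2) - 1) * u ^ (-(α + 1)) := by
      rw [Real.mul_rpow hm.le (by positivity), ← Real.rpow_natCast u 2, ← Real.rpow_mul hu0.le,
        mul_assoc]
      nth_rewrite 2 [← Real.rpow_one u]
      rw [← Real.rpow_add hu0]
      congr 2
      push_cast
      ring
    calc α / 2 * (m * u ^ 2) ^ (-(α / 2) - 1) * |u ^ 2 - 2 * Real.cos θ * u + 1 - u ^ 2|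
        ≤ α / 2 * (m * u ^ 2) ^ (-(α / 2) - 1) * (3 * u) :=
          mul_le_mul_of_nonneg_left habs (by positivity)
      _ = α / 2 * 3 * ((m * u ^ 2) ^ (-(α / 2) - 1) * u) := by ring
      _ = _ := by rw [hsplit]; ring

lemma phiIntegrand_lt {α θ₁ θ₂ t : ℝ} (h0 : 0 < α) (h₁ : Real.cos θ₁ < 1)
    (h : Real.cos θ₂ < Real.cos θ₁) (ht : 0 < t) :
    phiIntegrand α θ₂ t < phiIntegrand α θ₁ t := by
  obtain ⟨m, hm, -, hbase⟩ := exists_base_lower_bound h₁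
  have hu := Real.rpow_pos_of_pos ht (2 / (α + 2))
  unfold phiIntegrand
  rw [rpow_four_div ht]
  refine sub_lt_sub_right (Real.rpow_lt_rpow_of_neg ?_ ?_ (by linarith)) _
  · exact lt_of_lt_of_le (by positivity) (hbase _ hu.le)
  · nlinarith [mul_pos (sub_pos.2 h) hu]

lemma Phi_lt_Phi {α θ₁ θ₂ : ℝ} (h0 : 0 < α) (h2 : α < 2) (h₁ : Real.cos θ₁ < 1)
    (h : Real.cos θ₂ < Real.cos θ₁) : Phi α θ₂ < Phi α θ₁ := by
  have hi₁ := integrableOn_phiIntegrand h0 h2 h₁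
  have hi₂ := integrableOn_phiIntegrand h0 h2 (h.trans h₁)
  have hpos : 0 < ∫ t in Set.Ioi (0:ℝ), (phiIntegrand α θ₁ - phiIntegrand α θ₂) t := by
    rw [setIntegral_pos_iff_support_of_nonneg_ae ?_ (hi₁.sub hi₂)]
    · have hsub : Set.Ioi (0:ℝ) ⊆ Function.support (phiIntegrand α θ₁ - phiIntegrand α θ₂) :=
        fun t ht => Function.mem_support.2 (sub_pos.2 (phiIntegrand_lt h0 h₁ h ht)).ne'
      rw [Set.inter_eq_right.2 hsub]
      simp
    · exact (ae_restrict_mem measurableSet_Ioi).mono fun t ht =>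
        (sub_pos.2 (phiIntegrand_lt h0 h₁ h ht)).le
  rw [integral_sub' hi₁ hi₂] at hpos
  exact sub_pos.1 hpos

theorem phi_symmetric_and_decreasing (α : ℝ) (hα : α ∈ Set.Ioo (0:ℝ) 2) :
    (∀ θ ∈ Set.Ioo (0:ℝ) (2 * π), Phi α θ = Phi α (2 * π - θ)) ∧
      (∀ θ₁ θ₂ : ℝ, 0 < θ₁ → θ₁ < θ₂ → θ₂ ≤ π → Phi α θ₂ < Phi α θ₁) ∧
      ∀ θ ∈ Set.Ioo (0:ℝ) (2 * π), Phi α π ≤ Phi α θ := by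
  have hsymm : ∀ θ : ℝ, Phi α θ = Phi α (2 * π - θ) := fun θ => by
    simp only [Phi, Real.cos_two_pi_sub]
  have hdecr : ∀ θ₁ θ₂ : ℝ, 0 < θ₁ → θ₁ < θ₂ → θ₂ ≤ π → Phi α θ₂ < Phi α θ₁ := by
    intro θ₁ θ₂ h₁ h h₂
    refine Phi_lt_Phi hα.1 hα.2 ?_ (Real.cos_lt_cos_of_nonneg_of_le_pi h₁.le h₂ h)
    simpa using Real.cos_lt_cos_of_nonneg_of_le_pi le_rfl (h.le.trans h₂) h₁
  refine ⟨fun θ _ => hsymm θ, hdecr, fun θ hθ => ?_⟩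
  rcases lt_trichotomy θ π with h | h | h
  · exact (hdecr θ π hθ.1 h le_rfl).le
  · rw [h]
  · rw [hsymm θ]
    exact (hdecr _ π (by linarith [hθ.2]) (by linarith) le_rfl).le
end

section
/- Let α ∈ [1, 2). Then Φ_α(θ) tends to +∞ as θ tends to 0 from the right; that is, for every M ∈ ℝ there exists δ > 0 such that Φ_α(θ) > M for all θ ∈ (0, δ). -/
/-!
Write `x = t ^ (2 / (α + 2))`, `c = cos θ`, `s = sin θ` and `D = x² - 2 c x + 1`, so that the
integrand is `D ^ (-α/2) - x ^ (-α)`.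

For `c ≥ 1/2` the integrand is nonnegative on `t > 1` (there `D ≤ x²`), and on `(0, 1]` it is at
least `-t ^ (-2α/(α+2))`, whose integral is a finite constant because `α < 2`. On `(1, 3/2]` one has
`x - 1 ≤ t - 1` and `D = (x - 1)² + 2 (1 - c) x ≤ (t - 1 + 2θ)²`. Since `α ≥ 1`, for `θ ≤ 1/4` this
gives `D ^ (-α/2) ≥ 1 / (t - 1 + 2θ)`, whose integral over `(1, 3/2]` is at least `-log (4θ)` and
tends to `+∞` as `θ → 0⁺`.

These comparisons need the integrand to be integrable. On `(0, 1]` this follows from `D ≥ s²`. On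
`t > 1` it follows from `D ≥ s² x²` together with `(x²/D) ^ (α/2) ≤ x²/D`, which bound the integrand
by a multiple of `x ^ (-α-1)`, a power of `t` with exponent below `-1`.
-/

open Real MeasureTheory

/-- The integrand decays one power of `x` faster than `x ^ (-α)`; here `c` and `s` stand for
`cos θ` and `sin θ`. -/
lemma integrand_upper (α x c s : ℝ) (h2 : α < 2) (hx : 1 ≤ x) (hc : 1 / 2 ≤ c)
    (hc1 : c ≤ 1) (hs : 0 < s) (hcs : s ^ 2 + c ^ 2 = 1) :
    (x ^ 2 - 2 * c * x + 1) ^ (-(α / 2)) - x ^ (-α) ≤ 2 / s ^ 2 * x ^ (-α - 1) := by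
  have hx0 : 0 < x := by linarith
  have hDge : s ^ 2 * x ^ 2 ≤ x ^ 2 - 2 * c * x + 1 := by nlinarith [sq_nonneg (1 - c * x)]
  have hsx : 0 < s ^ 2 * x ^ 2 := by positivity
  set D := x ^ 2 - 2 * c * x + 1 with hD
  have hD0 : 0 < D := by linarith
  have hDle : D ≤ x ^ 2 := by nlinarith
  have e1 : D ^ (-(α / 2)) = x ^ (-α) * (x ^ 2 / D) ^ (α / 2) := by
    rw [Real.div_rpow (by positivity) hD0.le, ← Real.rpow_natCast x 2, ← Real.rpow_mul hx0.le,
      Real.rpow_neg hD0.le, Real.rpow_neg hx0.le]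
    have : ((2 : ℕ) : ℝ) * (α / 2) = α := by push_cast; ring
    rw [this]
    have : x ^ α ≠ 0 := (Real.rpow_pos_of_pos hx0 _).ne'
    field_simp
  have e2 : (x ^ 2 / D) ^ (α / 2) ≤ x ^ 2 / D := by
    have h : 1 ≤ x ^ 2 / D := (one_le_div hD0).2 hDle
    calc _ ≤ (x ^ 2 / D) ^ (1 : ℝ) := Real.rpow_le_rpow_of_exponent_le h (by linarith)
      _ = _ := Real.rpow_one _
  have e3 : x ^ 2 / D - 1 ≤ 2 / s ^ 2 * x⁻¹ := by
    have : x ^ 2 / D - 1 = (2 * c * x - 1) / D := by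
      rw [div_sub_one hD0.ne']; congr 1; rw [hD]; ring
    rw [this]
    calc (2 * c * x - 1) / D ≤ (2 * x) / (s ^ 2 * x ^ 2) := by
          apply div_le_div₀ (by positivity) (by nlinarith) hsx hDge
      _ = _ := by field_simp
  have hp : 0 < x ^ (-α) := Real.rpow_pos_of_pos hx0 _
  rw [e1, Real.rpow_sub_one hx0.ne']
  calc x ^ (-α) * (x ^ 2 / D) ^ (α / 2) - x ^ (-α) ≤ x ^ (-α) * (x ^ 2 / D - 1) := by nlinarith
    _ ≤ x ^ (-α) * (2 / s ^ 2 * x⁻¹) := by gcongr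
    _ = _ := by field_simp

lemma integrand_nonneg (α x c : ℝ) (h1 : 1 ≤ α) (hx : 1 ≤ x) (hc : 1 / 2 ≤ c) (hc1 : c < 1) :
    0 ≤ (x ^ 2 - 2 * c * x + 1) ^ (-(α / 2)) - x ^ (-α) := by
  have hx0 : 0 < x := by linarith
  have hD0 : 0 < x ^ 2 - 2 * c * x + 1 := by nlinarith [sq_nonneg (x - 1)]
  have hDle : x ^ 2 - 2 * c * x + 1 ≤ x ^ 2 := by nlinarith
  have : x ^ (-α) = (x ^ 2) ^ (-(α / 2)) := by
    rw [← Real.rpow_natCast x 2, ← Real.rpow_mul hx0.le]; congr 1; push_cast; ring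
  rw [this, sub_nonneg]
  exact Real.rpow_le_rpow_of_nonpos hD0 hDle (by linarith)

/-- Lower bound near the singularity `t = x = 1`, uniform in small `θ`. -/
lemma integrand_lower (α x t θ : ℝ) (h1 : 1 ≤ α) (hx : 1 ≤ x) (hxt : x ≤ t) (ht : t ≤ 3 / 2)
    (hθ : 0 < θ) (hθ1 : θ ≤ 1 / 4) (hc1 : Real.cos θ < 1) :
    (t - 1 + 2 * θ)⁻¹ - 1 ≤ (x ^ 2 - 2 * Real.cos θ * x + 1) ^ (-(α / 2)) - x ^ (-α) := by
  have hD0 : 0 < x ^ 2 - 2 * Real.cos θ * x + 1 := by nlinarith [sq_nonneg (x - 1)]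
  have hcos := Real.one_sub_sq_div_two_le_cos (x := θ)
  have hE0 : 0 < t - 1 + 2 * θ := by linarith
  have hDE : x ^ 2 - 2 * Real.cos θ * x + 1 ≤ (t - 1 + 2 * θ) ^ 2 := by
    have a1 : (1 - Real.cos θ) * x ≤ θ ^ 2 / 2 * 2 := by
      apply mul_le_mul <;> nlinarith
    nlinarith [mul_nonneg (sub_nonneg.2 (hx.trans hxt)) hθ.le]
  have a2 : x ^ (-α) ≤ 1 := Real.rpow_le_one_of_one_le_of_nonpos hx (by linarith)
  have a3 := Real.rpow_le_rpow_of_nonpos hD0 hDE (by linarith : -(α / 2) ≤ 0)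
  have a4 : ((t - 1 + 2 * θ) ^ 2) ^ (-(α / 2)) = (t - 1 + 2 * θ) ^ (-α) := by
    rw [← Real.rpow_natCast _ 2, ← Real.rpow_mul hE0.le]; congr 1; push_cast; ring
  have a5 : (t - 1 + 2 * θ) ^ (-1 : ℝ) ≤ (t - 1 + 2 * θ) ^ (-α) :=
    Real.rpow_le_rpow_of_exponent_ge hE0 (by linarith) (by linarith)
  rw [Real.rpow_neg_one] at a5
  linarith

theorem phi_tendsto_atTop (α : ℝ) (hα : α ∈ Set.Ico (1:ℝ) 2) :
    ∀ M : ℝ, ∃ δ > (0:ℝ), ∀ θ ∈ Set.Ioo (0:ℝ) δ, M < Phi α θ := by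
  obtain ⟨h1, h2⟩ := hα
  intro M
  set C : ℝ := ∫ t in Set.Ioc (0:ℝ) 1, t ^ (-(2 * α / (α + 2))) with hC
  -- The second bound on `θ` says exactly that `-log (4θ) > M + C + 1`.
  refine ⟨min (1 / 4) (Real.exp (-(M + C + 1)) / 4), by positivity, ?_⟩
  rintro θ ⟨hθ, hθδ⟩
  have hθ1 : θ < 1 / 4 := hθδ.trans_le (min_le_left _ _)
  have hθ2 : θ < Real.exp (-(M + C + 1)) / 4 := hθδ.trans_le (min_le_right _ _)
  have hs : 0 < Real.sin θ := Real.sin_pos_of_pos_of_lt_pi hθ (by linarith [Real.pi_gt_three])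
  have hcs := Real.sin_sq_add_cos_sq θ
  have hc1 : Real.cos θ < 1 := by nlinarith
  have hc : 1 / 2 ≤ Real.cos θ := by nlinarith [Real.one_sub_sq_div_two_le_cos (x := θ)]
  have hα2 : 0 < α + 2 := by linarith
  set f : ℝ → ℝ := fun t =>
    ((t ^ (4 / (α + 2)) - 2 * Real.cos θ * t ^ (2 / (α + 2)) + 1) ^ (-(α / 2)) -
      t ^ (-(2 * α / (α + 2)))) with hf
  have hfm : Measurable f := by rw [hf]; fun_prop
  have hfx : ∀ t : ℝ, 0 < t → f t = ((t ^ (2 / (α + 2))) ^ 2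
      - 2 * Real.cos θ * t ^ (2 / (α + 2)) + 1) ^ (-(α / 2)) - (t ^ (2 / (α + 2))) ^ (-α) := by
    intro t ht
    have b1 : t ^ (4 / (α + 2)) = (t ^ (2 / (α + 2))) ^ 2 := by
      rw [← Real.rpow_natCast, ← Real.rpow_mul ht.le]; congr 1; push_cast; ring
    have b2 : t ^ (-(2 * α / (α + 2))) = (t ^ (2 / (α + 2))) ^ (-α) := by
      rw [← Real.rpow_mul ht.le]; congr 1; ring
    simp only [hf, b1, b2]
  have hx1 : ∀ t : ℝ, 1 < t → 1 ≤ t ^ (2 / (α + 2)) := fun t ht =>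
    Real.one_le_rpow ht.le (by positivity)
  have hp : 2 * α / (α + 2) < 1 := by rw [div_lt_one hα2]; linarith
  have ipow : IntegrableOn (fun t : ℝ => t ^ (-(2 * α / (α + 2)))) (Set.Ioc 0 1) := by
    rw [← intervalIntegrable_iff_integrableOn_Ioc_of_le zero_le_one]
    exact intervalIntegral.intervalIntegrable_rpow' (by linarith)
  have i1 : IntegrableOn f (Set.Ioc 0 1) := by
    have hconst : IntegrableOn (fun _ : ℝ => (Real.sin θ ^ 2) ^ (-(α / 2))) (Set.Ioc 0 1) := by
      simp
    refine Integrable.mono' (hconst.add ipow) hfm.aestronglyMeasurable ?_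
    filter_upwards [ae_restrict_mem measurableSet_Ioc] with t ht
    have q1 : Real.sin θ ^ 2 ≤ (t ^ (2 / (α + 2))) ^ 2
        - 2 * Real.cos θ * t ^ (2 / (α + 2)) + 1 := by
      nlinarith [sq_nonneg (t ^ (2 / (α + 2)) - Real.cos θ)]
    have q2 := Real.rpow_le_rpow_of_nonpos (by positivity) q1 (by linarith : -(α / 2) ≤ 0)
    have q3 : 0 ≤ ((t ^ (2 / (α + 2))) ^ 2
        - 2 * Real.cos θ * t ^ (2 / (α + 2)) + 1) ^ (-(α / 2)) :=
      Real.rpow_nonneg (le_trans (by positivity) q1) _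
    have q4 : (0:ℝ) ≤ (t ^ (2 / (α + 2))) ^ (-α) :=
      Real.rpow_nonneg (Real.rpow_nonneg ht.1.le _) _
    have b2 : t ^ (-(2 * α / (α + 2))) = (t ^ (2 / (α + 2))) ^ (-α) := by
      rw [← Real.rpow_mul ht.1.le]; congr 1; ring
    rw [hfx t ht.1, Real.norm_eq_abs, Pi.add_apply, b2, abs_le]
    constructor <;> linarith [Real.rpow_nonneg (sq_nonneg (Real.sin θ)) (-(α / 2))]
  have hpos : ∀ t ∈ Set.Ioi (1:ℝ), 0 ≤ f t := by
    intro t ht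
    rw [hfx t (zero_lt_one.trans ht)]
    exact integrand_nonneg α _ _ h1 (hx1 t ht) hc hc1
  have i2 : IntegrableOn f (Set.Ioi 1) := by
    have hr : IntegrableOn (fun t : ℝ => 2 / Real.sin θ ^ 2 * t ^ (2 / (α + 2) * (-α - 1)))
        (Set.Ioi 1) := by
      refine (integrableOn_Ioi_rpow_of_lt ?_ zero_lt_one).const_mul _
      rw [div_mul_eq_mul_div, div_lt_iff₀ hα2]; linarith
    refine Integrable.mono' hr hfm.aestronglyMeasurable ?_
    filter_upwards [ae_restrict_mem measurableSet_Ioi] with t ht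
    have ht0 : (0:ℝ) < t := zero_lt_one.trans ht
    rw [Real.norm_eq_abs, abs_of_nonneg (hpos t ht), hfx t ht0, Real.rpow_mul ht0.le]
    exact integrand_upper α _ _ _ h2 (hx1 t ht) hc hc1.le hs hcs
  have hsplit : Phi α θ = (∫ t in Set.Ioc 0 1, f t) + ∫ t in Set.Ioi 1, f t := by
    rw [← setIntegral_union (Set.Ioc_disjoint_Ioi le_rfl) measurableSet_Ioi i1 i2,
      Set.Ioc_union_Ioi_eq_Ioi zero_le_one]
    rfl
  have l1 : -C ≤ ∫ t in Set.Ioc 0 1, f t := by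
    rw [hC, ← integral_neg]
    refine setIntegral_mono_on ipow.neg i1 measurableSet_Ioc fun t ht => ?_
    have : 0 ≤ ((t ^ (2 / (α + 2))) ^ 2
        - 2 * Real.cos θ * t ^ (2 / (α + 2)) + 1) ^ (-(α / 2)) :=
      Real.rpow_nonneg (by nlinarith [sq_nonneg (t ^ (2 / (α + 2)) - Real.cos θ)]) _
    have b2 : t ^ (-(2 * α / (α + 2))) = (t ^ (2 / (α + 2))) ^ (-α) := by
      rw [← Real.rpow_mul ht.1.le]; congr 1; ring
    rw [hfx t ht.1, b2]
    linarith
  have l2 : ∫ t in Set.Ioc (1:ℝ) (3 / 2), f t ≤ ∫ t in Set.Ioi 1, f t := by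
    refine setIntegral_mono_set i2 ?_ (Set.Ioc_subset_Ioi_self.eventuallyLE)
    filter_upwards [ae_restrict_mem measurableSet_Ioi] with t ht using hpos t ht
  have iE : IntervalIntegrable (fun t : ℝ => (t - 1 + 2 * θ)⁻¹ - 1) volume 1 (3 / 2) := by
    apply ContinuousOn.intervalIntegrable
    refine ContinuousOn.sub (ContinuousOn.inv₀ (by fun_prop) ?_) continuousOn_const
    intro t ht
    rw [Set.uIcc_of_le (by norm_num)] at ht
    linarith [ht.1]
  have l3 : ∫ t in (1:ℝ)..(3 / 2), ((t - 1 + 2 * θ)⁻¹ - 1)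
      ≤ ∫ t in Set.Ioc (1:ℝ) (3 / 2), f t := by
    rw [intervalIntegral.integral_of_le (by norm_num)]
    refine setIntegral_mono_on ?_ (i2.mono_set Set.Ioc_subset_Ioi_self) measurableSet_Ioc
      fun t ht => ?_
    · rwa [← intervalIntegrable_iff_integrableOn_Ioc_of_le (by norm_num)]
    · rw [hfx t (zero_lt_one.trans ht.1)]
      refine integrand_lower α _ t θ h1 (hx1 t ht.1) ?_ ht.2 hθ hθ1.le hc1
      calc t ^ (2 / (α + 2)) ≤ t ^ (1:ℝ) :=
            Real.rpow_le_rpow_of_exponent_le ht.1.le (by rw [div_le_one hα2]; linarith)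
        _ = t := Real.rpow_one t
  have l4 : ∫ t in (1:ℝ)..(3 / 2), ((t - 1 + 2 * θ)⁻¹ - 1)
      = Real.log ((1 / 2 + 2 * θ) / (2 * θ)) - 1 / 2 := by
    have e : ∀ t : ℝ, (t - 1 + 2 * θ)⁻¹ - 1 = (fun u : ℝ => u⁻¹ - 1) (t + (2 * θ - 1)) := by
      intro t; simp only; congr 2; ring
    simp_rw [e]
    rw [intervalIntegral.integral_comp_add_right (fun u : ℝ => u⁻¹ - 1),
      intervalIntegral.integral_sub, integral_inv_of_pos (by linarith) (by linarith)]
    · simp only [intervalIntegral.integral_const, smul_eq_mul]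
      ring_nf
    · apply intervalIntegral.intervalIntegrable_inv
      · intro t ht
        rw [Set.uIcc_of_le (by linarith)] at ht
        linarith [ht.1]
      · fun_prop
    · exact intervalIntegrable_const
  have l5 : M + C + 1 < Real.log ((1 / 2 + 2 * θ) / (2 * θ)) := by
    rw [Real.lt_log_iff_exp_lt (by positivity), lt_div_iff₀ (by positivity)]
    have hexp : Real.exp (M + C + 1) * Real.exp (-(M + C + 1)) = 1 := by
      rw [← Real.exp_add]; simp
    have := mul_lt_mul_of_pos_left hθ2 (Real.exp_pos (M + C + 1))
    linarith
  linarith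
end

section
/- Let α ∈ (0, 1). Then the function t ↦ |t^{2/(α+2)} − 1|^{−α} − t^{−2α/(α+2)} is Lebesgue integrable on (0, ∞); equivalently, the value Φ_α(0) obtained by setting cos θ = 1 in the integrand defining Φ_α is finite. -/
open Real MeasureTheory

/-!
The substitution `t = s ^ (1 + α / 2)` turns the integrand into a constant multiple of
`s ^ (α / 2) * (|s - 1| ^ (-α) - s ^ (-α))`. On `[0, 2]` the bracket is a difference of two
integrable power singularities (`α < 1`), multiplied by a continuous function. On `(2, ∞)` the two
powers cancel to first order, so the bracket is at most `2 * s ^ (-α - 1)` (`bracket_le`) and the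
integrand is dominated by `2 * s ^ (-1 - α / 2)`, which is integrable at infinity.
-/

lemma intervalIntegrable_abs_rpow {r : ℝ} (hr : -1 < r) :
    IntervalIntegrable (fun x : ℝ => |x| ^ r) volume (-1) 1 := by
  have h1 : IntervalIntegrable (fun x : ℝ => |x| ^ r) volume 0 1 := by
    refine (intervalIntegral.intervalIntegrable_rpow' hr).congr ?_
    intro x hx
    rw [Set.uIoc_of_le zero_le_one] at hx
    simp only [abs_of_pos hx.1]
  have h2 := (IntervalIntegrable.iff_comp_neg (f := fun x : ℝ => |x| ^ r)).1 h1
  simp only [abs_neg, neg_zero] at h2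
  exact h2.symm.trans h1

/-- First-order cancellation of the two powers at infinity. -/
lemma bracket_le {α s : ℝ} (h0 : 0 < α) (h1 : α < 1) (hs : 2 < s) :
    |(|s - 1| ^ (-α) - s ^ (-α))| ≤ 2 * s ^ (-α - 1) := by
  have hs0 : 0 < s := by linarith
  have hs1 : 0 < s - 1 := by linarith
  rw [abs_of_pos hs1]
  have hmono : s ^ (-α) ≤ (s - 1) ^ (-α) :=
    rpow_le_rpow_of_nonpos hs1 (by linarith) (by linarith)
  rw [abs_of_nonneg (by linarith)]
  have hq0 : 0 < (s - 1) / s := div_pos hs1 hs0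
  have hq1 : (s - 1) / s ≤ 1 := by rw [div_le_one hs0]; linarith
  -- `q ≤ q ^ α` for `q = (s - 1) / s ∈ (0, 1]` and `α ≤ 1` bounds the difference by
  -- `(s - 1) ^ (-α) / s`.
  have hq : (s - 1) / s ≤ ((s - 1) / s) ^ α := by
    simpa using rpow_le_rpow_of_exponent_ge hq0 hq1 h1.le
  have hfac : s ^ (-α) = (s - 1) ^ (-α) * ((s - 1) / s) ^ α := by
    rw [div_rpow hs1.le hs0.le, rpow_neg hs1.le, rpow_neg hs0.le]
    have := (rpow_pos_of_pos hs1 α).ne'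
    field_simp
  have hP : 0 < (s - 1) ^ (-α) := rpow_pos_of_pos hs1 _
  have hdiff : (s - 1) ^ (-α) - s ^ (-α) ≤ (s - 1) ^ (-α) * (1 / s) := by
    have h : 1 - ((s - 1) / s) ^ α ≤ 1 / s := by
      have : (s - 1) / s = 1 - 1 / s := by field_simp
      linarith
    calc (s - 1) ^ (-α) - s ^ (-α) = (s - 1) ^ (-α) * (1 - ((s - 1) / s) ^ α) := by
          rw [hfac]; ring
      _ ≤ _ := mul_le_mul_of_nonneg_left h hP.le
  have hhalf : (s - 1) ^ (-α) ≤ 2 * s ^ (-α) := by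
    calc (s - 1) ^ (-α) ≤ (s / 2) ^ (-α) :=
          rpow_le_rpow_of_nonpos (by linarith) (by linarith) (by linarith)
      _ = 2 ^ α * s ^ (-α) := by
          rw [div_rpow hs0.le (by norm_num), rpow_neg (by norm_num : (0:ℝ) ≤ 2)]
          field_simp
      _ ≤ 2 * s ^ (-α) := by
          gcongr
          simpa using rpow_le_rpow_of_exponent_le (by norm_num : (1:ℝ) ≤ 2) h1.le
  calc _ ≤ (s - 1) ^ (-α) * (1 / s) := hdiff
    _ ≤ 2 * s ^ (-α) * (1 / s) := by gcongr
    _ = 2 * s ^ (-α - 1) := by rw [rpow_sub_one hs0.ne']; ring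

theorem phi_integrand_integrable_at_zero_angle (α : ℝ) (hα : α ∈ Set.Ioo (0:ℝ) 1) :
    IntegrableOn
      (fun t : ℝ => |t ^ (2 / (α + 2)) - 1| ^ (-α) - t ^ (-(2 * α / (α + 2))))
      (Set.Ioi (0:ℝ)) := by
  obtain ⟨h0, h1⟩ := hα
  have hq : 1 + α / 2 ≠ 0 := by positivity
  have ha2 : α + 2 ≠ 0 := by positivity
  rw [← integrableOn_Ioi_comp_rpow_iff _ hq]
  have key : IntegrableOn (fun s : ℝ => s ^ (α / 2) * (|s - 1| ^ (-α) - s ^ (-α)))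
      (Set.Ioi (0:ℝ)) := by
    rw [← Set.Ioc_union_Ioi_eq_Ioi (zero_le_two : (0:ℝ) ≤ 2)]
    refine IntegrableOn.union ?_ ?_
    · have hA : IntervalIntegrable (fun s : ℝ => |s - 1| ^ (-α)) volume 0 2 := by
        have := (intervalIntegrable_abs_rpow (r := -α) (by linarith)).comp_sub_right 1
        norm_num at this
        exact this
      have hB : IntervalIntegrable (fun s : ℝ => s ^ (-α)) volume 0 2 :=
        intervalIntegral.intervalIntegrable_rpow' (by linarith)
      have hc : ContinuousOn (fun s : ℝ => s ^ (α / 2)) (Set.uIcc 0 2) :=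
        (continuous_rpow_const (by positivity)).continuousOn
      exact (intervalIntegrable_iff_integrableOn_Ioc_of_le zero_le_two).1
        ((hA.sub hB).continuousOn_mul hc)
    · have hdom : IntegrableOn (fun s : ℝ => 2 * s ^ (-1 - α / 2)) (Set.Ioi 2) :=
        (integrableOn_Ioi_rpow_of_lt (by linarith) zero_lt_two).const_mul 2
      refine Integrable.mono' hdom (by fun_prop) ?_
      refine (ae_restrict_mem measurableSet_Ioi).mono fun s hs => ?_
      have hs0 : 0 < s := lt_trans zero_lt_two hs
      rw [norm_eq_abs, abs_mul, abs_of_pos (rpow_pos_of_pos hs0 _)]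
      calc _ ≤ s ^ (α / 2) * (2 * s ^ (-α - 1)) := by
            gcongr
            exact bracket_le h0 h1 hs
        _ = 2 * (s ^ (α / 2) * s ^ (-α - 1)) := by ring
        _ = 2 * s ^ (-1 - α / 2) := by rw [← rpow_add hs0]; ring_nf
  refine IntegrableOn.congr_fun (key.const_mul |1 + α / 2|) (fun s hs => ?_) measurableSet_Ioi
  have hs0 : (0:ℝ) ≤ s := le_of_lt hs
  have e1 : (1 + α / 2) * (2 / (α + 2)) = 1 := by field_simp; ring
  have e2 : (1 + α / 2) * -(2 * α / (α + 2)) = -α := by field_simp; ring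
  simp only [smul_eq_mul]
  rw [← rpow_mul hs0, ← rpow_mul hs0, e1, e2, rpow_one, add_sub_cancel_left, mul_assoc]
end

section
/- Let α ∈ (0, 2). Then there exists θ̄ = θ̄(α) ∈ (0, π/2) such that Φ_α(θ̄) = 0 and Φ_α(θ) < 0 for every θ with θ̄ < θ < 2π − θ̄. -/
/-!
Put `β = α / 2 ∈ (0, 1)` and `c = cos θ`. The substitution `t = x ^ (β + 1)` gives
`Φ_α(θ) = (β + 1) I(c)` with `I(c) = ∫₀^∞ [(x + 1/x - 2c)^(-β) - x^(-β)] dx` (`Phi_eq`).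
The integrand is strictly increasing in `c < 1`, hence so is `I` (`int_hK_lt`), and `I` is
continuous by dominated convergence (`int_hK_cont`). Clearly `I(0) < 0`, since `x + 1/x > x`.
If `I(d) > 0` for some `d ∈ (0, 1)`, the intermediate value theorem gives `c ∈ (0, d)` with
`I(c) = 0`, and `θbar = arccos c` works because `cos θ < c` on `(θbar, 2π - θbar)`.

The positivity of `I` near `c = 1` (`exists_pos`) rests on a regularised change of variables.
The part of `I` over `(0, 1)` is folded onto `(1, ∞)` by `x ↦ 1/x` (`integral_fold`). On `(1, ∞)`,
`v = x - 1/x` has `dv = (1 + x⁻²) dx`, and comparing `∫ x^(-β) dx` with `∫ v^(-β) dv` through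
the antiderivative `(x^(1-β) - (x - 1/x)^(1-β)) / (1-β)` (`int_compDeriv`) yields
`I(c) = ∫₁^∞ (1 + x⁻²) [(x + 1/x - 2c)^(-β) - (x - 1/x)^(-β)] dx` (`int_foldedDiff`).
At `c = 1` the bracket is positive at every `x > 1`, as `x + 1/x - 2 < x - 1/x`; truncating the
integrand from above by an integrable function, dominated convergence as `c → 1` transfers the
positivity to some `c < 1`. (For `β ≥ 1/2` the untruncated integral at `c = 1` diverges.)
-/

open Real MeasureTheory

open Set Filter Topology

/-! ### The reduced integrand and its integrability -/

/-- The integrand of `Φ_α` after the substitution `t = x ^ (β + 1)`, up to the factor `β + 1`;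
here `β = α / 2` and `c = cos θ`. -/
noncomputable def hK (β c x : ℝ) : ℝ := (x + x⁻¹ - 2 * c) ^ (-β) - x ^ (-β)

lemma base_ge {c x : ℝ} (hc : -1 ≤ c) (hc1 : c ≤ 1) (hx : 0 < x) :
    (1 - c) / 2 * (x + x⁻¹) ≤ x + x⁻¹ - 2 * c := by
  have h2 : 2 ≤ x + x⁻¹ := by
    have : x + x⁻¹ - 2 = (x - 1) ^ 2 / x := by field_simp; ring
    have : 0 ≤ (x - 1) ^ 2 / x := by positivity
    linarith
  nlinarith

lemma base_pos {c x : ℝ} (hc1 : c < 1) (hx : 0 < x) : 0 < x + x⁻¹ - 2 * c := by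
  have : x + x⁻¹ - 2 = (x - 1) ^ 2 / x := by field_simp; ring
  have : 0 ≤ (x - 1) ^ 2 / x := by positivity
  linarith

lemma abs_rpow_sub_one_le {β y : ℝ} (h0 : 0 < β) (h1 : β < 1) (hy : 0 < y) :
    |y ^ β - 1| ≤ |y - 1| := by
  rcases le_total y 1 with h | h
  · have a : y ≤ y ^ β := by
      simpa using rpow_le_rpow_of_exponent_ge hy h h1.le
    have b : y ^ β ≤ 1 := rpow_le_one hy.le h h0.le
    rw [abs_of_nonpos (by linarith), abs_of_nonpos (by linarith)]; linarith
  · have a : y ^ β ≤ y := by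
      simpa using rpow_le_rpow_of_exponent_le h h1.le
    have b : 1 ≤ y ^ β := one_le_rpow h h0.le
    rw [abs_of_nonneg (by linarith), abs_of_nonneg (by linarith)]; linarith

lemma hK_measurable (β c : ℝ) : Measurable (hK β c) := by
  unfold hK; fun_prop

/-- Near `0` both terms are integrable separately. Near `∞` they are not, but writing
`x + 1/x - 2c = x y` with `y = 1 + O(1/x)` bounded below shows the difference is
`O(x ^ (-β - 1))`. -/
lemma hK_integrable {β c : ℝ} (h0 : 0 < β) (h1 : β < 1) (hc : -1 ≤ c) (hc1 : c < 1) :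
    IntegrableOn (hK β c) (Ioi 0) := by
  have hk : 0 < (1 - c) / 2 := by linarith
  rw [← Ioc_union_Ioi_eq_Ioi zero_le_one]
  refine IntegrableOn.union ?_ ?_
  · refine Integrable.sub ?_ ?_
    · refine Measure.integrableOn_of_bounded (M := ((1 - c) / 2) ^ (-β)) (by simp)
        (Measurable.aestronglyMeasurable (by fun_prop)) ?_
      filter_upwards [ae_restrict_mem measurableSet_Ioc] with x hx
      have hx0 := hx.1
      rw [norm_of_nonneg (by have := base_pos hc1 hx0; positivity)]
      refine rpow_le_rpow_of_nonpos hk ?_ (by linarith)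
      refine le_trans ?_ (base_ge hc hc1.le hx0)
      have : 1 ≤ x⁻¹ := (one_le_inv₀ hx0).2 hx.2
      nlinarith
    · have := (intervalIntegral.intervalIntegrable_rpow' (a := 0) (b := 1) (r := -β) (by linarith))
      rwa [intervalIntegrable_iff_integrableOn_Ioc_of_le zero_le_one] at this
  · have hI : IntegrableOn (fun x : ℝ => 3 * ((1 - c) / 2) ^ (-β) * x ^ (-β - 1)) (Ioi 1) :=
      (integrableOn_Ioi_rpow_of_lt (by linarith) one_pos).const_mul _
    refine Integrable.mono' hI (hK_measurable β c).aestronglyMeasurable ?_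
    filter_upwards [ae_restrict_mem measurableSet_Ioi] with x hx
    have hx1 : (1:ℝ) < x := hx
    have hx0 : (0:ℝ) < x := by linarith
    have hbp := base_pos hc1 hx0
    set y := (x + x⁻¹ - 2 * c) / x with hy
    have hyp : 0 < y := by positivity
    have hyk : (1 - c) / 2 ≤ y := by
      rw [hy, le_div_iff₀ hx0]
      refine le_trans ?_ (base_ge hc hc1.le hx0)
      have : 0 < x⁻¹ := by positivity
      nlinarith
    have e1 : hK β c x = x ^ (-β) * (y ^ (-β) * (1 - y ^ β)) := by
      have : x + x⁻¹ - 2 * c = x * y := by rw [hy]; field_simp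
      unfold hK
      rw [this, mul_rpow hx0.le hyp.le, mul_sub, mul_one, ← rpow_add hyp]
      simp [mul_sub]
    have e2 : |y - 1| ≤ 3 / x := by
      have : y - 1 = (x⁻¹ - 2 * c) / x := by rw [hy]; field_simp; ring
      rw [this, abs_div, abs_of_pos hx0]
      gcongr
      have : x⁻¹ ≤ 1 := inv_le_one_of_one_le₀ hx1.le
      have : 0 < x⁻¹ := by positivity
      rw [abs_le]; constructor <;> linarith
    have e3 : y ^ (-β) ≤ ((1 - c) / 2) ^ (-β) := rpow_le_rpow_of_nonpos hk hyk (by linarith)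
    have e4 : |1 - y ^ β| ≤ 3 / x := by
      rw [abs_sub_comm]; exact (abs_rpow_sub_one_le h0 h1 hyp).trans e2
    rw [e1, norm_mul, norm_mul, norm_of_nonneg (by positivity), norm_of_nonneg (by positivity),
      Real.norm_eq_abs, rpow_sub_one hx0.ne']
    calc x ^ (-β) * (y ^ (-β) * |1 - y ^ β|)
        ≤ x ^ (-β) * (((1 - c) / 2) ^ (-β) * (3 / x)) := by gcongr
      _ = _ := by ring

/-! ### Monotonicity and continuity in the parameter -/

lemma setIntegral_pos_of_pos {f : ℝ → ℝ} {a : ℝ} (hf : IntegrableOn f (Ioi a))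
    (hp : ∀ x, a < x → 0 < f x) : 0 < ∫ x in Ioi a, f x := by
  rw [setIntegral_pos_iff_support_of_nonneg_ae ?_ hf]
  · have : Function.support f ∩ Ioi a = Ioi a :=
      inter_eq_right.2 fun x hx => (hp x hx).ne'
    rw [this]; simp
  · filter_upwards [ae_restrict_mem measurableSet_Ioi] with x hx using (hp x hx).le

lemma hK_lt {β c d x : ℝ} (h0 : 0 < β) (hcd : c < d) (hd : d < 1) (hx : 0 < x) :
    hK β c x < hK β d x := by
  have := base_pos hd hx
  unfold hK
  have := rpow_lt_rpow_of_neg (z := -β) this (by linarith : x + x⁻¹ - 2 * d < x + x⁻¹ - 2 * c)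
    (by linarith)
  linarith

lemma int_hK_lt {β c d : ℝ} (h0 : 0 < β) (h1 : β < 1) (hc : -1 ≤ c) (hcd : c < d) (hd : d < 1) :
    ∫ x in Ioi 0, hK β c x < ∫ x in Ioi 0, hK β d x := by
  have a := hK_integrable h0 h1 hc (hcd.trans hd)
  have b := hK_integrable h0 h1 (hc.trans hcd.le) hd
  have := setIntegral_pos_of_pos (b.sub a) fun x hx => sub_pos.2 (hK_lt h0 hcd hd hx)
  simp only [Pi.sub_apply] at this
  rw [integral_sub b a] at this
  linarith

lemma int_hK_zero {β : ℝ} (h0 : 0 < β) (h1 : β < 1) : ∫ x in Ioi 0, hK β 0 x < 0 := by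
  have a := hK_integrable h0 h1 (by norm_num : (-1:ℝ) ≤ 0) zero_lt_one
  have := setIntegral_pos_of_pos a.neg fun x hx => by
    have : 0 < x⁻¹ := by positivity
    have := rpow_lt_rpow_of_neg (z := -β) hx (by linarith : x < x + x⁻¹ - 2 * 0) (by linarith)
    simp only [Pi.neg_apply, hK]
    linarith
  simp only [Pi.neg_apply, integral_neg] at this
  linarith

lemma int_hK_cont {β d : ℝ} (h0 : 0 < β) (h1 : β < 1) (hd0 : 0 < d) (hd : d < 1) :
    ContinuousOn (fun c => ∫ x in Ioi 0, hK β c x) (Icc 0 d) := by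
  have a := hK_integrable h0 h1 (by norm_num : (-1:ℝ) ≤ 0) zero_lt_one
  have b := hK_integrable h0 h1 (by linarith) hd
  refine continuousOn_of_dominated (bound := fun x => |hK β 0 x| + |hK β d x|) ?_ ?_
    (a.abs.add b.abs) ?_
  · exact fun c _ => (hK_measurable β c).aestronglyMeasurable
  · intro c hc
    filter_upwards [ae_restrict_mem measurableSet_Ioi] with x hx
    have l : hK β 0 x ≤ hK β c x := by
      rcases hc.1.eq_or_lt with h | h
      · rw [h]
      · exact (hK_lt h0 h (hc.2.trans_lt hd) hx).le
    have r : hK β c x ≤ hK β d x := by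
      rcases hc.2.eq_or_lt with h | h
      · rw [h]
      · exact (hK_lt h0 h hd hx).le
    rw [Real.norm_eq_abs, abs_le]
    constructor
    · linarith [neg_abs_le (hK β 0 x), abs_nonneg (hK β d x)]
    · linarith [le_abs_self (hK β d x), abs_nonneg (hK β 0 x)]
  · filter_upwards [ae_restrict_mem measurableSet_Ioi] with x hx
    intro c hc
    refine ContinuousAt.continuousWithinAt ?_
    unfold hK
    refine ContinuousAt.sub ?_ continuousAt_const
    exact ContinuousAt.rpow_const (by fun_prop) (Or.inl (base_pos (hc.2.trans_lt hd) hx).ne')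

/-! ### Folding and the regularised change of variables -/

/-- Folding of `(0, 1)` onto `(1, ∞)` by `x ↦ 1/x`. -/
lemma integral_fold {F : ℝ → ℝ} (hF : IntegrableOn F (Ioi 0)) :
    IntegrableOn (fun x => F x + (x ^ 2)⁻¹ * F x⁻¹) (Ioi 1) ∧
    ∫ x in Ioi 0, F x = ∫ x in Ioi 1, (F x + (x ^ 2)⁻¹ * F x⁻¹) := by
  have him : (fun x : ℝ => x⁻¹) '' Ioi 1 = Ioo 0 1 := by
    ext y; constructor
    · rintro ⟨x, hx, rfl⟩
      have : (1:ℝ) < x := hx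
      exact ⟨by positivity, inv_lt_one_of_one_lt₀ hx⟩
    · rintro ⟨a, b⟩
      exact ⟨y⁻¹, (one_lt_inv₀ a).2 b, inv_inv y⟩
  have hd : ∀ x ∈ Ioi (1:ℝ), HasDerivWithinAt (fun x : ℝ => x⁻¹) (-(x ^ 2)⁻¹) (Ioi 1) x :=
    fun x hx => (hasDerivAt_inv (zero_lt_one.trans hx).ne').hasDerivWithinAt
  have hinj : InjOn (fun x : ℝ => x⁻¹) (Ioi 1) := inv_injective.injOn
  have habs : ∀ x : ℝ, |-(x ^ 2)⁻¹| = (x ^ 2)⁻¹ := fun x => by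
    rw [abs_neg, abs_of_nonneg (by positivity)]
  have h1 : IntegrableOn F (Ioo 0 1) := hF.mono_set fun x hx => hx.1
  have h2 : IntegrableOn F (Ioi 1) := hF.mono_set fun x hx => zero_lt_one.trans (mem_Ioi.1 hx)
  have e := integral_image_eq_integral_abs_deriv_smul measurableSet_Ioi hd hinj F
  have i := integrableOn_image_iff_integrableOn_abs_deriv_smul measurableSet_Ioi hd hinj F
  rw [him] at e i
  simp only [habs, smul_eq_mul] at e i
  refine ⟨h2.add (i.1 h1), ?_⟩
  rw [integral_add h2 (i.1 h1), ← e, ← Ioc_union_Ioi_eq_Ioi zero_le_one,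
    setIntegral_union (by simp) measurableSet_Ioi (hF.mono_set fun x hx => hx.1) h2,
    integral_Ioc_eq_integral_Ioo, add_comm]

/-- Derivative of `(x ^ (1 - β) - (x - 1/x) ^ (1 - β)) / (1 - β)` on `(1, ∞)`: it compares
`x ^ (-β) dx` with `v ^ (-β) dv` for `v = x - 1/x`. -/
noncomputable def compDeriv (β x : ℝ) : ℝ := x ^ (-β) - (1 + (x ^ 2)⁻¹) * (x - x⁻¹) ^ (-β)

lemma sub_inv_pos {x : ℝ} (hx : 1 < x) : 0 < x - x⁻¹ := by
  have := inv_lt_one_of_one_lt₀ hx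
  linarith

/-- The antiderivative equals `1 / (1 - β)` at `1` and vanishes at `∞`; integrability is automatic
since the derivative is nonpositive. -/
lemma int_compDeriv {β : ℝ} (h0 : 0 < β) (h1 : β < 1) :
    IntegrableOn (compDeriv β) (Ioi 1) ∧ ∫ x in Ioi 1, compDeriv β x = - (1 / (1 - β)) := by
  have hb : 0 < 1 - β := by linarith
  set A : ℝ → ℝ := fun x => (x ^ (1 - β) - (x - x⁻¹) ^ (1 - β)) / (1 - β) with hA
  have hcont : ContinuousWithinAt A (Ici 1) 1 := by
    refine ContinuousAt.continuousWithinAt ?_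
    refine ContinuousAt.div_const (ContinuousAt.sub ?_ ?_) _
    · exact ContinuousAt.rpow_const continuousAt_id (Or.inl one_ne_zero)
    · refine ContinuousAt.rpow_const ?_ (Or.inr hb.le)
      exact continuousAt_id.sub (continuousAt_inv₀ one_ne_zero)
  have hder : ∀ x ∈ Ioi (1:ℝ), HasDerivAt A (compDeriv β x) x := by
    intro x hx
    have hx0 : (0:ℝ) < x := zero_lt_one.trans hx
    have d1 := Real.hasDerivAt_rpow_const (x := x) (p := 1 - β) (Or.inl hx0.ne')
    have d2 := (((hasDerivAt_id x).sub (hasDerivAt_inv hx0.ne')).rpow_const (p := 1 - β)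
      (Or.inl (sub_inv_pos hx).ne'))
    have := (d1.sub d2).div_const (1 - β)
    refine this.congr_deriv ?_
    simp only [compDeriv, Pi.sub_apply, id, show 1 - β - 1 = -β by ring]
    field_simp
    ring
  have hneg : ∀ x ∈ Ioi (1:ℝ), compDeriv β x ≤ 0 := by
    intro x hx
    have hx0 : (0:ℝ) < x := zero_lt_one.trans hx
    have hs := sub_inv_pos hx
    have : x ^ (-β) ≤ (x - x⁻¹) ^ (-β) :=
      rpow_le_rpow_of_nonpos hs (by have : 0 < x⁻¹ := by positivity
                                    linarith) (by linarith)
    have p : 0 ≤ (x ^ 2)⁻¹ * (x - x⁻¹) ^ (-β) := by positivity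
    unfold compDeriv; linarith
  have hlim : Tendsto A atTop (𝓝 0) := by
    have hz : Tendsto (fun x : ℝ => x⁻¹ / (1 - β)) atTop (𝓝 0) := by
      simpa using tendsto_inv_atTop_zero.div_const (1 - β)
    refine squeeze_zero' ?_ ?_ hz
    · filter_upwards [eventually_gt_atTop 1] with x hx
      have hx0 : (0:ℝ) < x := zero_lt_one.trans hx
      have : (x - x⁻¹) ^ (1 - β) ≤ x ^ (1 - β) :=
        rpow_le_rpow (sub_inv_pos hx).le (by have : 0 < x⁻¹ := by positivity
                                             linarith) hb.le
      exact div_nonneg (by linarith) hb.le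
    · filter_upwards [eventually_gt_atTop 1] with x hx
      have hx0 : (0:ℝ) < x := zero_lt_one.trans hx
      have hs := sub_inv_pos hx
      -- with `y = 1 - x⁻²`, the numerator is `x^(1-β) (1 - y^(1-β)) ≤ x (1 - y) = x⁻¹`
      set y := (x - x⁻¹) / x with hy
      have hyp : 0 < y := by positivity
      have hy1 : 1 - y = x⁻¹ / x := by rw [hy]; field_simp; ring
      have e : x - x⁻¹ = x * y := by rw [hy]; field_simp
      have hyle : y ≤ y ^ (1 - β) := by
        have : y ≤ 1 := by
          have : 0 ≤ x⁻¹ / x := by positivity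
          linarith
        simpa using rpow_le_rpow_of_exponent_ge hyp this (by linarith : 1 - β ≤ 1)
      have hxle : x ^ (1 - β) ≤ x := by
        simpa using rpow_le_rpow_of_exponent_le (le_of_lt hx) (by linarith : 1 - β ≤ 1)
      simp only [hA]
      gcongr
      rw [e, mul_rpow hx0.le hyp.le]
      calc x ^ (1 - β) - x ^ (1 - β) * y ^ (1 - β) = x ^ (1 - β) * (1 - y ^ (1 - β)) := by ring
        _ ≤ x ^ (1 - β) * (1 - y) := by gcongr
        _ ≤ x * (1 - y) := by
            have : 0 ≤ 1 - y := by rw [hy1]; positivity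
            gcongr
        _ = x⁻¹ := by rw [hy1]; field_simp
  refine ⟨integrableOn_Ioi_deriv_of_nonpos hcont hder hneg hlim, ?_⟩
  rw [integral_Ioi_of_hasDerivAt_of_nonpos hcont hder hneg hlim]
  simp [hA, ne_of_gt hb]

/-- The integrand over `(1, ∞)` obtained by folding `hK β c` and changing variables; unlike
`hK β 1`, at `c = 1` it is pointwise positive. -/
noncomputable def foldedDiff (β c x : ℝ) : ℝ :=
  (1 + (x ^ 2)⁻¹) * ((x + x⁻¹ - 2 * c) ^ (-β) - (x - x⁻¹) ^ (-β))

lemma int_foldedDiff {β c : ℝ} (h0 : 0 < β) (h1 : β < 1) (hc : -1 ≤ c) (hc1 : c < 1) :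
    IntegrableOn (foldedDiff β c) (Ioi 1) ∧ ∫ x in Ioi 1, foldedDiff β c x =
      ∫ x in Ioi 0, hK β c x := by
  obtain ⟨i1, e1⟩ := integral_fold (hK_integrable h0 h1 hc hc1)
  obtain ⟨i2, e2⟩ := int_compDeriv h0 h1
  have i3 : IntegrableOn (fun x : ℝ => x ^ (β - 2)) (Ioi 1) :=
    integrableOn_Ioi_rpow_of_lt (by linarith) one_pos
  have e3 : ∫ x in Ioi (1:ℝ), x ^ (β - 2) = 1 / (1 - β) := by
    rw [integral_Ioi_rpow_of_lt (by linarith) one_pos, one_rpow,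
      show β - 2 + 1 = -(1 - β) by ring, neg_div_neg_eq]
  have key : EqOn (fun x => (hK β c x + (x ^ 2)⁻¹ * hK β c x⁻¹) + (compDeriv β x + x ^ (β - 2)))
      (foldedDiff β c) (Ioi 1) := by
    intro x hx
    have hx0 : (0:ℝ) < x := zero_lt_one.trans hx
    have a : (x⁻¹) ^ (-β) = x ^ β := by rw [inv_rpow hx0.le, rpow_neg hx0.le, inv_inv]
    have b : x ^ (β - 2) = (x ^ 2)⁻¹ * x ^ β := by
      rw [rpow_sub hx0, div_eq_mul_inv, mul_comm]; norm_num
    simp only [hK, compDeriv, foldedDiff, inv_inv, a, b, add_comm x⁻¹ x]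
    ring
  refine ⟨(i1.add (i2.add i3)).congr_fun key measurableSet_Ioi, ?_⟩
  have e4 := integral_add i2 i3
  have e5 := integral_add i1 (i2.add i3)
  simp only [Pi.add_apply] at e5
  rw [← setIntegral_congr_fun measurableSet_Ioi key, e5, e4, e1, e2, e3]
  ring

/-! ### Positivity for parameters close to one -/

/-- Dominated convergence as `c → 1` is applied to `min (foldedDiff β c) |foldedDiff β 0|`, which is
bounded by `|foldedDiff β 0|` because `foldedDiff` is increasing in `c`. -/
lemma exists_pos {β : ℝ} (h0 : 0 < β) (h1 : β < 1) :
    ∃ c : ℝ, 0 < c ∧ c < 1 ∧ 0 < ∫ x in Ioi 0, hK β c x := by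
  have iD0 := (int_foldedDiff h0 h1 (by norm_num : (-1:ℝ) ≤ 0) zero_lt_one).1
  have hm : ∀ c, Measurable (foldedDiff β c) := fun c => by unfold foldedDiff; fun_prop
  have hev : ∀ᶠ c : ℝ in 𝓝[<] 1, 0 < c ∧ c < 1 := Ioo_mem_nhdsLT one_pos
  have bMin : ∀ c, 0 ≤ c → c ≤ 1 → ∀ x ∈ Ioi (1:ℝ),
      ‖min (foldedDiff β c x) |foldedDiff β 0 x|‖ ≤ |foldedDiff β 0 x| := by
    intro c hc hc1 x hx
    have hx0 : (0:ℝ) < x := zero_lt_one.trans hx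
    have hle : foldedDiff β 0 x ≤ foldedDiff β c x := by
      unfold foldedDiff
      have hp : 0 < x + x⁻¹ - 2 * c := by
        have : x + x⁻¹ - 2 = (x - 1) ^ 2 / x := by field_simp; ring
        have : 0 < (x - 1) ^ 2 / x := by
          have : 0 < x - 1 := sub_pos.2 hx
          positivity
        linarith
      have := rpow_le_rpow_of_nonpos (z := -β) hp
        (by linarith : x + x⁻¹ - 2 * c ≤ x + x⁻¹ - 2 * 0) (by linarith)
      gcongr
    rw [Real.norm_eq_abs, abs_le]
    exact ⟨le_min ((neg_abs_le _).trans hle) (by linarith [abs_nonneg (foldedDiff β 0 x)]),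
      min_le_right _ _⟩
  have mMin : ∀ c, Measurable (fun x => min (foldedDiff β c x) |foldedDiff β 0 x|) := fun c =>
    (hm c).min (hm 0).abs
  have iMin : ∀ c, 0 ≤ c → c ≤ 1 →
      IntegrableOn (fun x => min (foldedDiff β c x) |foldedDiff β 0 x|) (Ioi 1) :=
    fun c hc hc1 => Integrable.mono' iD0.abs (mMin c).aestronglyMeasurable (by
      filter_upwards [ae_restrict_mem measurableSet_Ioi] with x hx using bMin c hc hc1 x hx)
  have hpos : 0 < ∫ x in Ioi 1, min (foldedDiff β 1 x) |foldedDiff β 0 x| := by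
    refine setIntegral_pos_of_pos (iMin 1 zero_le_one le_rfl) fun x hx => ?_
    have hx0 : (0:ℝ) < x := zero_lt_one.trans hx
    have hi : x⁻¹ < 1 := inv_lt_one_of_one_lt₀ hx
    have hi0 : 0 < x⁻¹ := by positivity
    have hs := sub_inv_pos hx
    refine lt_min ?_ (abs_pos.2 (ne_of_lt ?_))
    · have hp : 0 < x + x⁻¹ - 2 * 1 := by
        have : x + x⁻¹ - 2 = (x - 1) ^ 2 / x := by field_simp; ring
        have : 0 < (x - 1) ^ 2 / x := by
          have : 0 < x - 1 := sub_pos.2 hx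
          positivity
        linarith
      have := rpow_lt_rpow_of_neg (z := -β) hp (by linarith : x + x⁻¹ - 2 * 1 < x - x⁻¹)
        (by linarith)
      exact mul_pos (by positivity) (sub_pos.2 this)
    · have := rpow_lt_rpow_of_neg (z := -β) hs (by linarith : x - x⁻¹ < x + x⁻¹ - 2 * 0)
        (by linarith)
      exact mul_neg_of_pos_of_neg (by positivity) (sub_neg.2 this)
  have hlim : Tendsto (fun c => ∫ x in Ioi 1, min (foldedDiff β c x) |foldedDiff β 0 x|) (𝓝[<] 1)
      (𝓝 (∫ x in Ioi 1, min (foldedDiff β 1 x) |foldedDiff β 0 x|)) := by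
    refine tendsto_integral_filter_of_dominated_convergence (fun x => |foldedDiff β 0 x|) ?_ ?_ iD0.abs ?_
    · exact Eventually.of_forall fun c => (mMin c).aestronglyMeasurable
    · filter_upwards [hev] with c hc
      filter_upwards [ae_restrict_mem measurableSet_Ioi] with x hx using bMin c hc.1.le hc.2.le x hx
    · filter_upwards [ae_restrict_mem measurableSet_Ioi] with x hx
      have hx0 : (0:ℝ) < x := zero_lt_one.trans hx
      refine Tendsto.min ?_ tendsto_const_nhds
      refine Tendsto.mono_left ?_ nhdsWithin_le_nhds
      have hp : x + x⁻¹ - 2 * 1 ≠ 0 := by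
        have : x + x⁻¹ - 2 * 1 = (x - 1) ^ 2 / x := by field_simp; ring
        rw [this]
        have : 0 < x - 1 := sub_pos.2 hx
        positivity
      have : ContinuousAt (fun c => foldedDiff β c x) 1 := by
        unfold foldedDiff
        refine continuousAt_const.mul (ContinuousAt.sub ?_ continuousAt_const)
        exact ContinuousAt.rpow_const (by fun_prop) (Or.inl hp)
      exact this
  obtain ⟨c, hc, hc0, hc1⟩ := ((hlim.eventually (lt_mem_nhds hpos)).and hev).exists
  obtain ⟨iD, eD⟩ := int_foldedDiff h0 h1 (by linarith) hc1
  refine ⟨c, hc0, hc1, hc.trans_le ?_⟩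
  rw [← eD]
  exact integral_mono (iMin c hc0.le hc1.le) iD fun x => min_le_left _ _

/-! ### Reduction of the original function and conclusion -/

lemma Phi_eq {α θ : ℝ} (h0 : 0 < α) :
    Phi α θ = (α / 2 + 1) * ∫ x in Ioi 0, hK (α / 2) (cos θ) x := by
  have hp : (0:ℝ) < α / 2 + 1 := by linarith
  unfold Phi
  rw [← integral_comp_rpow_Ioi _ hp.ne', ← integral_const_mul]
  refine setIntegral_congr_fun measurableSet_Ioi fun x hx => ?_
  have hx0 : (0:ℝ) < x := hx
  have a1 : (x ^ (α / 2 + 1)) ^ (4 / (α + 2)) = x ^ 2 := by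
    rw [← rpow_mul hx0.le, show (α / 2 + 1) * (4 / (α + 2)) = (2:ℕ) by
      push_cast; field_simp; ring, rpow_natCast]
  have a2 : (x ^ (α / 2 + 1)) ^ (2 / (α + 2)) = x := by
    rw [← rpow_mul hx0.le, show (α / 2 + 1) * (2 / (α + 2)) = 1 by field_simp, rpow_one]
  have a3 : (x ^ (α / 2 + 1)) ^ (-(2 * α / (α + 2))) = x ^ (-(α / 2)) * x ^ (-(α / 2)) := by
    rw [← rpow_mul hx0.le, ← rpow_add hx0]
    congr 1; field_simp; ring
  have a4 : x ^ 2 - 2 * cos θ * x + 1 = x * (x + x⁻¹ - 2 * cos θ) := by field_simp; ring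
  have hb : 0 ≤ x + x⁻¹ - 2 * cos θ := by
    have : x + x⁻¹ - 2 = (x - 1) ^ 2 / x := by field_simp; ring
    have : 0 ≤ (x - 1) ^ 2 / x := by positivity
    linarith [cos_le_one θ]
  have a5 : x ^ (α / 2) * x ^ (-(α / 2)) = 1 := by rw [← rpow_add hx0]; simp
  simp only [smul_eq_mul, a1, a2, a3, a4, abs_of_pos hp, hK, mul_rpow hx0.le hb,
    add_sub_cancel_right]
  linear_combination (α / 2 + 1) * ((x + x⁻¹ - 2 * cos θ) ^ (-(α / 2)) - x ^ (-(α / 2))) * a5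

theorem phi_has_zero_and_negative (α : ℝ) (hα : α ∈ Set.Ioo (0:ℝ) 2) :
    ∃ θbar ∈ Set.Ioo (0:ℝ) (π / 2),
      Phi α θbar = 0 ∧ ∀ θ : ℝ, θbar < θ → θ < 2 * π - θbar → Phi α θ < 0 := by
  have h0 : 0 < α / 2 := by linarith [hα.1]
  have h1 : α / 2 < 1 := by linarith [hα.2]
  obtain ⟨d, hd0, hd1, hd⟩ := exists_pos h0 h1
  obtain ⟨c, hc, hc0⟩ := intermediate_value_Ioo hd0.le (int_hK_cont h0 h1 hd0 hd1)
    ⟨int_hK_zero h0 h1, hd⟩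
  simp only at hc0
  have hc1 : c < 1 := hc.2.trans hd1
  have hcos : cos (arccos c) = c := cos_arccos (by linarith [hc.1]) hc1.le
  refine ⟨arccos c, ⟨arccos_pos.2 hc1, arccos_lt_pi_div_two.2 hc.1⟩, ?_, ?_⟩
  · rw [Phi_eq hα.1, hcos, hc0, mul_zero]
  · intro θ hl hr
    have hlt : cos θ < c := by
      rw [← hcos]
      rcases le_total θ π with h | h
      · exact cos_lt_cos_of_nonneg_of_le_pi (arccos_nonneg c) h hl
      · rw [← cos_two_pi_sub θ]
        exact cos_lt_cos_of_nonneg_of_le_pi (arccos_nonneg c) (by linarith) (by linarith)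
    rw [Phi_eq hα.1]
    have := int_hK_lt h0 h1 (neg_one_le_cos θ) hlt hc1
    rw [hc0] at this
    exact mul_neg_of_pos_of_neg (by linarith) this
end

section
/- Let α ∈ (0, 2). Then ∫₀^∞ [ s^{2α/(2−α)} / (s^{4/(2−α)} + 1)^{α/2} − 1 ] ds = −(α/2) · β((α+2)/4, (α+2)/4). -/
/-!
Write `a = α / 2`, `p = 4 / (2 - α) > 2` and `t(s) = s ^ p / (s ^ p + 1)`, so that the integrand
on the left is `t(s) ^ a - 1`. Integrating the derivative of `s * (t(s) ^ a - 1)`, a function which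
vanishes at `0` and at `∞`, gives

  `∫ (t(s) ^ a - 1) ds = - a * ∫ s * t'(s) * t(s) ^ (a - 1) ds`.

Since `s = (t / (1 - t)) ^ ((1 - a) / 2)`, the substitution `t = t(s)`, which maps `(0, ∞)`
bijectively onto `(0, 1)`, turns the last integral into the Beta integral with both
exponents equal to `(a - 1) / 2`. Both halves of the derivative are integrable: the first because
`|t(s) ^ a - 1| ≤ min 1 (s ^ (-p))`, the second because the Beta integral converges.
-/

open Real MeasureTheory

/-- The Euler Beta function (for positive real arguments). -/
noncomputable def betaFn (z w : ℝ) : ℝ :=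
  ∫ t in (0:ℝ)..1, t ^ (z - 1) * (1 - t) ^ (w - 1)

/-- Convergence of the real Beta integral, deduced from the complex one by taking norms. -/
lemma integrableOn_beta {z w : ℝ} (hz : 0 < z) (hw : 0 < w) :
    IntegrableOn (fun t : ℝ => t ^ (z - 1) * (1 - t) ^ (w - 1)) (Set.Ioo 0 1) := by
  have h := (Complex.betaIntegral_convergent (u := (z : ℂ)) (v := (w : ℂ))
    (by simpa using hz) (by simpa using hw)).norm
  rw [intervalIntegrable_iff_integrableOn_Ioo_of_le zero_le_one] at h
  refine h.congr_fun ?_ measurableSet_Ioo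
  intro t ht
  have h1 : 0 < 1 - t := sub_pos.2 ht.2
  have h2 : (1 - (t : ℂ)) = ((1 - t : ℝ) : ℂ) := by push_cast; rfl
  simp only [norm_mul]
  rw [h2, Complex.norm_cpow_eq_rpow_re_of_pos ht.1, Complex.norm_cpow_eq_rpow_re_of_pos h1]
  simp

/-- The substitution `s ↦ s ^ p / (s ^ p + 1)`, an increasing bijection from `(0, ∞)` onto
`(0, 1)` when `p > 0`. -/
noncomputable def subst (p s : ℝ) : ℝ := s ^ p / (s ^ p + 1)

lemma subst_mem {p s : ℝ} (hs : 0 < s) : subst p s ∈ Set.Ioo (0 : ℝ) 1 := by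
  have hu : 0 < s ^ p := rpow_pos_of_pos hs p
  refine ⟨by unfold subst; positivity, ?_⟩
  rw [subst, div_lt_one (by positivity)]
  linarith

lemma hasDerivAt_subst {p s : ℝ} (hs : 0 < s) :
    HasDerivAt (subst p) (p * s ^ (p - 1) / (s ^ p + 1) ^ 2) s := by
  have hu : 0 < s ^ p := rpow_pos_of_pos hs p
  have h := hasDerivAt_rpow_const (x := s) (p := p) (Or.inl hs.ne')
  convert! h.div (h.add_const 1) (by positivity) using 1
  ring

lemma injOn_subst {p : ℝ} (hp : 0 < p) : Set.InjOn (subst p) (Set.Ioi 0) := by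
  intro x hx y hy hxy
  have hx' : 0 < x ^ p := rpow_pos_of_pos hx p
  have hy' : 0 < y ^ p := rpow_pos_of_pos hy p
  unfold subst at hxy
  rw [div_eq_div_iff (by positivity) (by positivity)] at hxy
  exact (rpow_left_inj (le_of_lt hx) (le_of_lt hy) hp.ne').1 (by linarith)

lemma image_subst {p : ℝ} (hp : 0 < p) : subst p '' Set.Ioi 0 = Set.Ioo 0 1 := by
  ext t
  constructor
  · rintro ⟨s, hs, rfl⟩
    exact subst_mem hs
  · rintro ⟨h0, h1⟩
    have h2 : 0 < 1 - t := sub_pos.2 h1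
    refine ⟨(t / (1 - t)) ^ p⁻¹, rpow_pos_of_pos (div_pos h0 h2) _, ?_⟩
    rw [subst, rpow_inv_rpow (div_pos h0 h2).le hp.ne']
    field_simp
    ring

/-- For `p = 2 / (1 - a)`, the identity `s = (t / (1 - t)) ^ ((1 - a) / 2)` at `t = subst p s`,
with both sides multiplied by `t ^ (a - 1)`. -/
lemma beta_integrand_subst {a p s : ℝ} (hpa : p * ((a - 1) / 2) = -1) (hs : 0 < s) :
    subst p s ^ ((a - 1) / 2) * (1 - subst p s) ^ ((a - 1) / 2) = s * subst p s ^ (a - 1) := by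
  have hu : 0 < s ^ p := rpow_pos_of_pos hs p
  have hv : 0 < (s ^ p + 1)⁻¹ := by positivity
  have h1 : 1 - subst p s = (s ^ p + 1)⁻¹ := by unfold subst; field_simp; ring
  have hub : (s ^ p) ^ ((a - 1) / 2) = s⁻¹ := by rw [← rpow_mul hs.le, hpa, rpow_neg_one]
  have hsq : subst p s ^ (a - 1) = subst p s ^ ((a - 1) / 2) * subst p s ^ ((a - 1) / 2) := by
    rw [← rpow_add (subst_mem hs).1, add_halves]
  rw [h1, hsq, subst, div_eq_mul_inv (s ^ p), mul_rpow hu.le hv.le, hub]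
  field_simp

lemma abs_subst_rpow_sub_one_le {a p s : ℝ} (ha0 : 0 < a) (ha1 : a < 1) (hs : 0 < s) :
    |subst p s ^ a - 1| ≤ 1 ∧ |subst p s ^ a - 1| ≤ s ^ (-p) := by
  have hu : 0 < s ^ p := rpow_pos_of_pos hs p
  obtain ⟨h0, h1⟩ := subst_mem (p := p) hs
  have h2 : subst p s ^ a ≤ 1 := rpow_le_one h0.le h1.le ha0.le
  have h3 : subst p s ≤ subst p s ^ a := by
    simpa using rpow_le_rpow_of_exponent_ge h0 h1.le ha1.le
  have h4 : 1 - subst p s ≤ s ^ (-p) := by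
    rw [rpow_neg hs.le, show 1 - subst p s = (s ^ p + 1)⁻¹ by unfold subst; field_simp; ring]
    gcongr
    linarith
  rw [abs_of_nonpos (by linarith)]
  constructor <;> linarith

lemma continuousOn_subst_rpow {a p : ℝ} (ha0 : 0 < a) (hp : 0 < p) :
    ContinuousOn (fun s => subst p s ^ a - 1) (Set.Ici 0) := by
  have h : ContinuousOn (fun s : ℝ => s ^ p) (Set.Ici 0) :=
    (continuous_rpow_const hp.le).continuousOn
  refine ContinuousOn.sub (ContinuousOn.rpow_const ?_ fun _ _ => Or.inr ha0.le)
    continuousOn_const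
  refine h.div (h.add continuousOn_const) fun s hs => ?_
  have : 0 ≤ s ^ p := rpow_nonneg hs p
  positivity

lemma integrableOn_subst_rpow_sub_one {a p : ℝ} (ha0 : 0 < a) (ha1 : a < 1) (hp : 1 < p) :
    IntegrableOn (fun s => subst p s ^ a - 1) (Set.Ioi 0) := by
  have hc := continuousOn_subst_rpow (p := p) ha0 (by linarith)
  rw [← Set.Ioc_union_Ioi_eq_Ioi zero_le_one]
  refine IntegrableOn.union ?_ ?_
  · exact ((hc.mono Set.Icc_subset_Ici_self).integrableOn_Icc).mono_set Set.Ioc_subset_Icc_self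
  · refine Integrable.mono' (integrableOn_Ioi_rpow_of_lt (a := -p) (by linarith) one_pos) ?_ ?_
    · exact (hc.mono (Set.Ioi_subset_Ici zero_le_one)).aestronglyMeasurable
        measurableSet_Ioi
    · filter_upwards [ae_restrict_mem measurableSet_Ioi] with s hs
      exact (abs_subst_rpow_sub_one_le ha0 ha1 (zero_lt_one.trans hs)).2

theorem I_zero_eval (α : ℝ) (hα : α ∈ Set.Ioo (0:ℝ) 2) :
    (∫ s in Set.Ioi (0:ℝ),
        (s ^ (2 * α / (2 - α)) / (s ^ (4 / (2 - α)) + 1) ^ (α / 2) - 1)) =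
      -(α / 2) * betaFn ((α + 2) / 4) ((α + 2) / 4) := by
  obtain ⟨hα0, hα2⟩ := hα
  have hd : 0 < 2 - α := by linarith
  obtain ⟨a, rfl⟩ : ∃ a, α = 2 * a := ⟨α / 2, by ring⟩
  have ha0 : 0 < a := by linarith
  have ha1 : a < 1 := by linarith
  rw [show 2 * a / 2 = a by ring]
  set p := 4 / (2 - 2 * a) with hpdef
  have hp1 : 1 < p := by rw [hpdef, lt_div_iff₀ hd]; linarith
  have hp0 : 0 < p := by linarith
  have hd' : 1 - a ≠ 0 := (sub_pos.2 ha1).ne'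
  have hpa : p * ((a - 1) / 2) = -1 := by
    rw [hpdef, show 2 - 2 * a = 2 * (1 - a) by ring]; field_simp; ring
  have hexp : 2 * (2 * a) / (2 - 2 * a) = p * a := by rw [hpdef]; ring
  have hz : (2 * a + 2) / 4 - 1 = (a - 1) / 2 := by ring
  set t' : ℝ → ℝ := fun s => p * s ^ (p - 1) / (s ^ p + 1) ^ 2 with ht'
  have ht'pos : ∀ s ∈ Set.Ioi (0 : ℝ), 0 ≤ t' s := fun s hs => by
    have : 0 < s := hs
    simp only [ht']
    positivity
  have hL : (∫ s in Set.Ioi (0:ℝ), (s ^ (2 * (2 * a) / (2 - 2 * a)) / (s ^ p + 1) ^ a - 1)) =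
      ∫ s in Set.Ioi (0:ℝ), (subst p s ^ a - 1) := by
    refine setIntegral_congr_fun measurableSet_Ioi fun s hs => ?_
    have hs' : 0 < s := hs
    simp only [subst]
    rw [hexp, div_rpow (by positivity) (by positivity), rpow_mul hs'.le]
  have hderiv : ∀ s ∈ Set.Ioi (0 : ℝ), HasDerivWithinAt (subst p) (t' s) (Set.Ioi 0) s :=
    fun s hs => (hasDerivAt_subst hs).hasDerivWithinAt
  have hcongr : Set.EqOn
      (fun s => |t' s| • (subst p s ^ ((a - 1) / 2) * (1 - subst p s) ^ ((a - 1) / 2)))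
      (fun s => s * (t' s * subst p s ^ (a - 1))) (Set.Ioi 0) := fun s hs => by
    simp only [smul_eq_mul]
    rw [abs_of_nonneg (ht'pos s hs), beta_integrand_subst hpa hs]
    ring
  have hBint : IntegrableOn (fun s => s * (t' s * subst p s ^ (a - 1))) (Set.Ioi 0) := by
    have h := integrableOn_beta (z := (2 * a + 2) / 4) (w := (2 * a + 2) / 4)
      (by positivity) (by positivity)
    rw [hz, ← image_subst hp0, integrableOn_image_iff_integrableOn_abs_deriv_smul
      measurableSet_Ioi hderiv (injOn_subst hp0)] at h
    exact h.congr_fun hcongr measurableSet_Ioi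
  have hB : betaFn ((2 * a + 2) / 4) ((2 * a + 2) / 4) =
      ∫ s in Set.Ioi (0 : ℝ), s * (t' s * subst p s ^ (a - 1)) := by
    rw [betaFn, hz, intervalIntegral.integral_of_le zero_le_one, integral_Ioc_eq_integral_Ioo,
      ← image_subst hp0, integral_image_eq_integral_abs_deriv_smul measurableSet_Ioi hderiv
        (injOn_subst hp0)]
    exact setIntegral_congr_fun measurableSet_Ioi hcongr
  have hAint := integrableOn_subst_rpow_sub_one ha0 ha1 hp1
  have hFTC := integral_Ioi_of_hasDerivAt_of_tendsto (a := 0) (m := 0)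
    (f := fun s => s * (subst p s ^ a - 1))
    (f' := fun s => (subst p s ^ a - 1) + a * (s * (t' s * subst p s ^ (a - 1))))
    ((continuousOn_id.mul (continuousOn_subst_rpow ha0 hp0)) 0 Set.self_mem_Ici)
    (fun s hs => by
      have h := ((hasDerivAt_subst (p := p) hs).rpow_const (p := a)
        (Or.inl (subst_mem hs).1.ne')).sub_const 1
      convert! (hasDerivAt_id s).mul h using 1
      simp only [ht', id]
      ring)
    (hAint.add (hBint.const_mul a))
    (by
      have h := tendsto_rpow_neg_atTop (y := p - 1) (by linarith)
      refine squeeze_zero_norm' ?_ h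
      filter_upwards [Filter.eventually_gt_atTop 0] with s hs
      rw [norm_mul, norm_eq_abs, norm_eq_abs, abs_of_pos hs,
        show -(p - 1) = 1 + -p by ring, rpow_add hs, rpow_one]
      gcongr
      exact (abs_subst_rpow_sub_one_le ha0 ha1 hs).2)
  rw [integral_add hAint (hBint.const_mul a), integral_const_mul, ← hB] at hFTC
  rw [hL]
  simp only [zero_mul, sub_zero] at hFTC
  linarith
end

section
/- For every x ∈ (1/2, 1), one has 1/(x−1) + Σ_{k=1}^{∞} C(−x, k)² · (3/4)^k · (1/(x+k−1)) · 4^k (k!)² / (2k)! < 0, the series being convergent. -/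
/-!
Multiplying out, the `k`-th term is `3 ^ k * (x)_k ^ 2 / ((2 * k)! * (x + k - 1))`, with `(x)_k` the
rising factorial. The first term is `3 * x / 2`, and consecutive terms have the ratio
`3 * (x + k) * (x + k - 1) / ((2 * k + 1) * (2 * k + 2))` (`seriesTerm_succ`, where the index is shifted by one), which is `x * (x + 1) / 4`
for `k = 1` and at most `3 / 4` for every `k` since `x < 1`. Keeping the first ratio exact and
comparing the terms from the second on with a geometric series of ratio `3 / 4` gives
`S ≤ (3 * x / 2) * (1 + x + x ^ 2)`. Hence `(1 - x) * S ≤ 3 * x * (1 - x ^ 3) / 2 < 1`.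
-/

open Real

/-- The generalized binomial coefficient `C(y, k)` for a real `y`. -/
noncomputable def gbinom (y : ℝ) (k : ℕ) : ℝ :=
  (∏ j ∈ Finset.range k, (y - j)) / (Nat.factorial k : ℝ)

/-- The term of the series with index `k + 1`. -/
noncomputable def seriesTerm (x : ℝ) (k : ℕ) : ℝ :=
  (gbinom (-x) (k + 1)) ^ 2 * (3/4 : ℝ) ^ (k + 1) *
    (1 / (x + ((k : ℝ) + 1) - 1)) *
    (4 ^ (k + 1) * ((Nat.factorial (k + 1) : ℝ)) ^ 2 /
      (Nat.factorial (2 * (k + 1)) : ℝ))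

lemma gbinom_succ (y : ℝ) (k : ℕ) :
    gbinom y (k + 1) = gbinom y k * ((y - k) / (k + 1)) := by
  unfold gbinom
  rw [Finset.prod_range_succ, Nat.factorial_succ]
  push_cast
  field_simp

lemma seriesTerm_zero {x : ℝ} (hx : 0 < x) : seriesTerm x 0 = 3 * x / 2 := by
  simp [seriesTerm, gbinom]
  field_simp

lemma seriesTerm_succ {x : ℝ} (hx : 0 < x) (k : ℕ) :
    seriesTerm x (k + 1) =
      3 * (x + k + 1) * (x + k) / ((2 * k + 3) * (2 * k + 4)) * seriesTerm x k := by
  have h1 : x + ((k : ℝ) + 1) - 1 = x + k := by ring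
  have h2 : x + (((k + 1 : ℕ) : ℝ) + 1) - 1 = x + k + 1 := by push_cast; ring
  have h3 : x + (k : ℝ) ≠ 0 := by positivity
  have h4 : x + (k : ℝ) + 1 ≠ 0 := by positivity
  have h5 : (Nat.factorial (2 * (k + 1 + 1)) : ℝ)
      = (2 * k + 4) * ((2 * k + 3) * (Nat.factorial (2 * (k + 1)) : ℝ)) := by
    rw [show 2 * (k + 1 + 1) = 2 * (k + 1) + 1 + 1 by ring, Nat.factorial_succ, Nat.factorial_succ]
    push_cast
    ring
  have h6 : (Nat.factorial (k + 1 + 1) : ℝ) = (k + 2) * (Nat.factorial (k + 1) : ℝ) := by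
    rw [Nat.factorial_succ]
    push_cast
    ring
  have h7 : gbinom (-x) (k + 1 + 1) = gbinom (-x) (k + 1) * (-(x + k + 1) / (k + 2)) := by
    rw [gbinom_succ (-x) (k + 1)]
    push_cast
    ring
  unfold seriesTerm
  rw [h1, h2, h5, h6, h7, pow_succ _ (k + 1), pow_succ _ (k + 1)]
  field_simp

lemma seriesTerm_nonneg {x : ℝ} (hx : 0 < x) (k : ℕ) : 0 ≤ seriesTerm x k := by
  induction k with
  | zero => rw [seriesTerm_zero hx]; positivity
  | succ k ih => rw [seriesTerm_succ hx]; positivity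

lemma seriesTerm_succ_le {x : ℝ} (hx : 0 < x) (hx1 : x < 1) (k : ℕ) :
    seriesTerm x (k + 1) ≤ 3 / 4 * seriesTerm x k := by
  rw [seriesTerm_succ hx]
  refine mul_le_mul_of_nonneg_right ?_ (seriesTerm_nonneg hx k)
  have hk : (0 : ℝ) ≤ k := k.cast_nonneg
  rw [div_le_iff₀ (by positivity)]
  have h : (x + k + 1) * (x + k) ≤ (k + 2) * (k + 1) :=
    mul_le_mul (by linarith) (by linarith) (by positivity) (by positivity)
  nlinarith

lemma seriesTerm_geometric {x : ℝ} (hx : 0 < x) (hx1 : x < 1) (k : ℕ) :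
    seriesTerm x (k + 1) ≤ seriesTerm x 1 * (3 / 4) ^ k := by
  induction k with
  | zero => simp
  | succ k ih =>
    have := seriesTerm_succ_le hx hx1 (k + 1)
    rw [pow_succ]
    linarith

theorem key_series_negative :
    ∀ x ∈ Set.Ioo (1/2 : ℝ) 1,
      ∃ S : ℝ,
        HasSum (fun k : ℕ =>
          (gbinom (-x) (k + 1)) ^ 2 * (3/4 : ℝ) ^ (k + 1) *
            (1 / (x + ((k : ℝ) + 1) - 1)) *
            (4 ^ (k + 1) * ((Nat.factorial (k + 1) : ℝ)) ^ 2 /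
              (Nat.factorial (2 * (k + 1)) : ℝ))) S ∧
        1 / (x - 1) + S < 0 := by
  rintro x ⟨hx2, hx1⟩
  have hx : 0 < x := by linarith
  have hgeo : HasSum (fun k : ℕ => seriesTerm x 1 * (3 / 4 : ℝ) ^ k) (seriesTerm x 1 * 4) := by
    have h := (hasSum_geometric_of_lt_one (r := (3 / 4 : ℝ)) (by norm_num) (by norm_num)).mul_left
      (seriesTerm x 1)
    norm_num at h ⊢
    exact h
  have htail : Summable (fun k : ℕ => seriesTerm x (k + 1)) :=
    Summable.of_nonneg_of_le (fun k => seriesTerm_nonneg hx (k + 1))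
      (seriesTerm_geometric hx hx1) hgeo.summable
  have hsum : Summable (seriesTerm x) := (summable_nat_add_iff 1).mp htail
  refine ⟨∑' k, seriesTerm x k, hsum.hasSum, ?_⟩
  have hle : ∑' k, seriesTerm x (k + 1) ≤ seriesTerm x 1 * 4 :=
    hasSum_le (seriesTerm_geometric hx hx1) htail.hasSum hgeo
  have h1 : seriesTerm x 1 = x * (x + 1) / 4 * (3 * x / 2) := by
    have h := seriesTerm_succ hx 0
    rw [seriesTerm_zero hx] at h
    norm_num at h
    rw [h]
    ring
  have hS : ∑' k, seriesTerm x k ≤ 3 * x / 2 * (1 + x + x ^ 2) := by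
    rw [hsum.tsum_eq_zero_add, seriesTerm_zero hx]
    rw [h1] at hle
    linarith
  have hd : 0 < 1 - x := by linarith
  have hpoly : 3 * x / 2 * (1 + x + x ^ 2) < 1 / (1 - x) := by
    rw [lt_div_iff₀ hd]
    -- This is `0 < 3 * x ^ 4 - 3 * x + 2`; the squares are centred near its minimiser `4 ^ (-1 / 3)`.
    nlinarith [sq_nonneg (x ^ 2 - 2 / 5), sq_nonneg (x - 5 / 8)]
  have hneg : 1 / (x - 1) = -(1 / (1 - x)) := by
    rw [← neg_sub, one_div, one_div, inv_neg]
  rw [hneg]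
  linarith
end

section
/- For k ∈ ℕ with k ≥ 1 and x ∈ (1/2, 1), define f_k(x) = C(−x, k)² · (1/(x+k−1)) · 4^k (k!)² / (2k)!. Then for every x ∈ (1/2, 1) one has Σ_{k=5}^{∞} f_k(x) · (3/4)^k < 27/35. -/
/-!
For `0 < x < 1` consecutive coefficients satisfy
`f_{k+1}(x) / f_k(x) = 2 (x + k) (x + k - 1) / ((k + 1) (2k + 1)) ≤ 2k / (2k + 1) ≤ 1`
(`fcoef_succ`, `fcoef_succ_le`), so the terms `f_k(x) (3/4)^k` decay at least geometrically with
ratio `3/4`. The tail from `k = 5` is therefore at most `4 f_5(x) (3/4)^5`. Since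
`f_5(x) (3/4)^5` is a constant multiple of `(x (x+1) (x+2) (x+3))² (x+4)`, it is strictly smaller
than its value `27/140` at `x = 1` (`fcoef_five_lt`), which gives exactly the bound `27/35`.
-/

open Real

/-- The coefficient `f_k(x)` appearing in the series estimate. -/
noncomputable def fcoef (k : ℕ) (x : ℝ) : ℝ :=
  (gbinom (-x) k) ^ 2 * (1 / (x + (k : ℝ) - 1)) *
    (4 ^ k * ((Nat.factorial k : ℝ)) ^ 2 / (Nat.factorial (2 * k) : ℝ))

lemma fcoef_nonneg {x : ℝ} (hx : 0 < x) {k : ℕ} (hk : 1 ≤ k) : 0 ≤ fcoef k x := by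
  have hk' : (1 : ℝ) ≤ k := by exact_mod_cast hk
  have h : 0 < x + (k : ℝ) - 1 := by linarith
  unfold fcoef
  positivity

lemma fcoef_succ {x : ℝ} (hx : 0 < x) {k : ℕ} (hk : 1 ≤ k) :
    fcoef (k + 1) x =
      fcoef k x * (2 * (x + k) * (x + k - 1) / (((k : ℝ) + 1) * (2 * k + 1))) := by
  have hk' : (1 : ℝ) ≤ k := by exact_mod_cast hk
  have h : x + (k : ℝ) - 1 ≠ 0 := by linarith
  have h' : x + (k : ℝ) ≠ 0 := by linarith
  have h1 : (k : ℝ) + 1 ≠ 0 := by positivity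
  have h2 : 2 * (k : ℝ) + 1 ≠ 0 := by positivity
  have h3 : (Nat.factorial k : ℝ) ≠ 0 := by positivity
  have h4 : (Nat.factorial (2 * k) : ℝ) ≠ 0 := by positivity
  have h5 : x + ((k : ℝ) + 1) - 1 = x + k := by ring
  have h6 : (Nat.factorial (2 * (k + 1)) : ℝ) =
      2 * (k + 1) * (2 * k + 1) * Nat.factorial (2 * k) := by
    rw [show 2 * (k + 1) = 2 * k + 1 + 1 by ring, Nat.factorial_succ, Nat.factorial_succ]
    push_cast
    ring
  unfold fcoef gbinom
  rw [h6, Finset.prod_range_succ, Nat.factorial_succ]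
  push_cast
  rw [h5]
  field_simp
  ring

lemma fcoef_succ_le {x : ℝ} (hx : 0 < x) (hx1 : x < 1) {k : ℕ} (hk : 1 ≤ k) :
    fcoef (k + 1) x ≤ fcoef k x := by
  have hk' : (1 : ℝ) ≤ k := by exact_mod_cast hk
  rw [fcoef_succ hx hk]
  refine mul_le_of_le_one_right (fcoef_nonneg hx hk) ?_
  rw [div_le_one (by positivity)]
  have : (x + k) * (x + k - 1) ≤ ((k : ℝ) + 1) * k :=
    mul_le_mul (by linarith) (by linarith) (by linarith) (by linarith)
  nlinarith

lemma fcoef_five_lt {x : ℝ} (hx : 0 < x) (hx1 : x < 1) :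
    fcoef 5 x * (3 / 4 : ℝ) ^ 5 < 27 / 140 := by
  have h4 : x + 4 ≠ 0 := by linarith
  have h : fcoef 5 x * (3 / 4 : ℝ) ^ 5 =
      (x * (x + 1) * (x + 2) * (x + 3)) ^ 2 * (x + 4) * (243 / 3628800) := by
    have h5 : x + (5 : ℝ) - 1 = x + 4 := by ring
    simp only [fcoef, gbinom, Finset.prod_range_succ, Finset.prod_range_zero, Nat.factorial]
    push_cast
    rw [h5]
    field_simp
    ring
  have hb : (x * (x + 1) * (x + 2) * (x + 3)) ^ 2 * (x + 4) <
      (1 * (1 + 1) * (1 + 2) * (1 + 3)) ^ 2 * (1 + 4) := by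
    gcongr
  rw [h]
  linarith

theorem series_tail_bound :
    ∀ x ∈ Set.Ioo (1/2 : ℝ) 1,
      ∃ S : ℝ, HasSum (fun k : ℕ => fcoef (k + 5) x * (3/4 : ℝ) ^ (k + 5)) S ∧
        S < 27 / 35 := by
  rintro x ⟨hx, hx1⟩
  have hx0 : 0 < x := by linarith
  have hmono : ∀ k : ℕ, fcoef (k + 5) x ≤ fcoef 5 x := by
    intro k
    induction k with
    | zero => simp
    | succ k ih =>
      rw [show k + 1 + 5 = k + 5 + 1 by ring]
      exact (fcoef_succ_le hx0 hx1 (by omega)).trans ih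
  have hle : ∀ k : ℕ, fcoef (k + 5) x * (3/4 : ℝ) ^ (k + 5) ≤
      fcoef 5 x * (3/4 : ℝ) ^ 5 * (3/4 : ℝ) ^ k := by
    intro k
    rw [mul_assoc, ← pow_add, add_comm 5 k]
    exact mul_le_mul_of_nonneg_right (hmono k) (by positivity)
  have hgeo : HasSum (fun k : ℕ => fcoef 5 x * (3/4 : ℝ) ^ 5 * (3/4 : ℝ) ^ k)
      (fcoef 5 x * (3/4 : ℝ) ^ 5 * (1 - 3/4)⁻¹) :=
    (hasSum_geometric_of_lt_one (by norm_num) (by norm_num)).mul_left _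
  have hsum : Summable (fun k : ℕ => fcoef (k + 5) x * (3/4 : ℝ) ^ (k + 5)) :=
    Summable.of_nonneg_of_le
      (fun k => mul_nonneg (fcoef_nonneg hx0 (by omega)) (by positivity)) hle hgeo.summable
  refine ⟨_, hsum.hasSum, ?_⟩
  have h1 := hasSum_le hle hsum.hasSum hgeo
  have h2 := fcoef_five_lt hx0 hx1
  have h3 : (1 - 3/4 : ℝ)⁻¹ = 4 := by norm_num
  rw [h3] at h1
  linarith
end

section
/- For every real x ∈ (1/2, 1), the polynomial value 9x⁸ + 72x⁷ + 366x⁶ + 684x⁵ + 1749x⁴ − 756x³ + 4596x² − 3264x + 1024 is strictly positive. -/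
theorem polynomial_positive :
    ∀ x ∈ Set.Ioo (1/2 : ℝ) 1,
      0 < 9*x^8 + 72*x^7 + 366*x^6 + 684*x^5 + 1749*x^4 - 756*x^3 + 4596*x^2
            - 3264*x + 1024 := by
  intro x hx
  have h0 : 0 < x := by linarith [hx.1]
  -- Completing squares absorbs both negative coefficients; the rest is positive for `0 < x`.
  have key : 9*x^8 + 72*x^7 + 366*x^6 + 684*x^5 + 1749*x^4 - 756*x^3 + 4596*x^2
        - 3264*x + 1024
      = 9*x^8 + 72*x^7 + 366*x^6 + 684*x^5 + 453*x^4 + (7539/4)*x^2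
        + (x*(36*x - 21/2))^2 + (51*x - 32)^2 := by ring
  rw [key]
  positivity
end

section
/- Let α ∈ (0, 2). Then Φ_α(π/6) + Φ_α(7π/6) < 0. -/
/-!
Put `a = α / 2 ∈ (0, 1)`. The substitution `t = s ^ (1 + a)` gives
`Φ_α(θ) = (1 + a) ∫₀^∞ [(s + 1/s - 2 cos θ)^(-a) - s^(-a)] ds`, so the sum of the two values is
`(1 + a) ∫₀^∞ g`, with `g(s) = A^(-a) + B^(-a) - 2 s^(-a)`, `A = s + 1/s - √3`,
`B = s + 1/s + √3`. With `w = s - 1/s` one has `A B = 1 + w²` and `B - A = 2√3`.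

Folding by `s ↦ 1/s` gives `2 ∫ g = ∫ [g(s) + s⁻² g(1/s)] ds`, in which `A^(-a) + B^(-a)` is
multiplied by `dw/ds = 1 + s⁻²`. Writing
`A^(-a) + B^(-a) = 2 (A B)^(-a/2) cosh (a δ)`, `δ = log (B / A) / 2`, the inequality
`cosh (a δ) - 1 ≤ a² (cosh δ - 1)` yields (`two_power_bound`)
`A^(-a) + B^(-a) ≤ 2 (1 + w²)^(-a/2) + 3 a² (1 + w²)^(-a/2 - 1)`.

On the other hand
`d/dw [w (1 + w²)^(-a/2)] = (1 - a) (1 + w²)^(-a/2) + a (1 + w²)^(-a/2 - 1)`.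
Hence `1 - a` times the folded integrand is at most `2 Q'` minus
`(2 a - 3 a² (1 - a)) (1 + s⁻²) (1 + w²)^(-a/2 - 1)`, where
`Q(s) = w (1 + w²)^(-a/2) - s^(1 - a) + s^(a - 1)` tends to `0` at both `0` and `∞`. As
`3 a (1 - a) < 2`, the remainder is strictly negative, and so is the integral.
-/

open Real MeasureTheory

open Set Filter Topology

/-! ### The integrand after the substitution `t = s ^ (1 + a)` -/

/-- The integrand of `Phi` in the variable `s`, up to the factor `1 + a`, with `a = α / 2` and
`c = cos θ`. -/
noncomputable def kern (a c s : ℝ) : ℝ := (s + s⁻¹ - 2 * c) ^ (-a) - s ^ (-a)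

lemma quad_pos {c s : ℝ} (hc : |c| < 1) (hs : 0 < s) :
    (1 - |c|) * s ≤ s + s⁻¹ - 2 * c ∧ 2 - 2 * |c| ≤ s + s⁻¹ - 2 * c := by
  have h2 : 2 ≤ s + s⁻¹ := by
    have : s + s⁻¹ - 2 = (s - 1) ^ 2 * s⁻¹ := by field_simp; ring
    have : 0 ≤ (s - 1) ^ 2 * s⁻¹ := by positivity
    linarith
  have h3 := le_abs_self c
  have h4 : 0 < s⁻¹ := by positivity
  have h5 := abs_nonneg c
  constructor <;> nlinarith

lemma phi_eq (α θ : ℝ) (hα : 0 < α) (hc : |cos θ| < 1) :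
    Phi α θ = (1 + α / 2) * ∫ s in Ioi (0:ℝ), kern (α / 2) (cos θ) s := by
  have hp : 0 < 1 + α / 2 := by linarith
  rw [Phi, ← integral_comp_rpow_Ioi_of_pos hp, ← integral_const_mul]
  refine setIntegral_congr_fun measurableSet_Ioi fun s hs => ?_
  have hs : 0 < s := hs
  have h1 : (s ^ (1 + α / 2)) ^ (4 / (α + 2)) = s ^ 2 := by
    rw [← rpow_mul hs.le, ← rpow_natCast]; congr 1; push_cast; field_simp; ring
  have h2 : (s ^ (1 + α / 2)) ^ (2 / (α + 2)) = s := by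
    rw [← rpow_mul hs.le]; conv_rhs => rw [← rpow_one s]
    congr 1; field_simp; ring
  have h3 : (s ^ (1 + α / 2)) ^ (-(2 * α / (α + 2))) = s ^ (-α) := by
    rw [← rpow_mul hs.le]; congr 1; field_simp; ring
  have hq : 0 < s + s⁻¹ - 2 * cos θ := by
    have := (quad_pos hc hs).2; linarith
  have h4 : s ^ 2 - 2 * cos θ * s + 1 = s * (s + s⁻¹ - 2 * cos θ) := by field_simp; ring
  have h5 : s ^ (1 + α / 2 - 1) * s ^ (-(α / 2)) = 1 := by
    rw [← rpow_add hs]; simp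
  have h6 : s ^ (1 + α / 2 - 1) * s ^ (-α) = s ^ (-(α / 2)) := by
    rw [← rpow_add hs]; congr 1; ring
  simp only [h1, h2, h3, h4, kern, smul_eq_mul]
  rw [mul_rpow hs.le hq.le, mul_assoc, mul_sub, ← mul_assoc, h5, h6, one_mul]

/-- Convexity of `x ↦ x ^ (-a)`: the graph lies above its tangent at `y`. -/
lemma rpow_neg_tangent {a x y : ℝ} (ha : 0 < a) (hx : 0 < x) (hy : 0 < y) :
    y ^ (-a) - x ^ (-a) ≤ a * y ^ (-a - 1) * (x - y) := by
  have h1 : 1 - a * (x / y - 1) ≤ (x / y) ^ (-a) := by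
    rw [rpow_def_of_pos (by positivity)]
    have := log_le_sub_one_of_pos (show 0 < x / y by positivity)
    have := add_one_le_exp (log (x / y) * -a)
    nlinarith
  rw [div_rpow hx.le hy.le, le_div_iff₀ (by positivity)] at h1
  have h2 : y ^ (-a - 1) = y ^ (-a) / y := by rw [rpow_sub_one hy.ne']
  rw [h2]
  have : a * (y ^ (-a) / y) * (x - y) = a * (x / y - 1) * y ^ (-a) := by field_simp
  rw [this]; linarith

/-- Near `0` the kernel is a bounded function minus `s ^ (-a)`; near `∞` the mean value estimate
makes it `O(s ^ (-a - 1))`. -/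
lemma kern_integrable {a c : ℝ} (ha : 0 < a) (ha1 : a < 1) (hc : |c| < 1) :
    IntegrableOn (kern a c) (Ioi 0) := by
  have hmeas : Measurable (kern a c) := by unfold kern; fun_prop
  rw [← Ioc_union_Ioi_eq_Ioi (zero_le_one (α := ℝ))]
  have hd : 0 < 1 - |c| := by linarith
  apply IntegrableOn.union
  · have h1 : IntegrableOn (fun s : ℝ => (2 - 2 * |c|) ^ (-a) + s ^ (-a)) (Ioc 0 1) := by
      refine Integrable.add (by simp) ?_
      exact (intervalIntegrable_iff_integrableOn_Ioc_of_le zero_le_one).1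
        (intervalIntegral.intervalIntegrable_rpow' (by linarith))
    refine Integrable.mono' h1 hmeas.aestronglyMeasurable ?_
    filter_upwards [ae_restrict_mem measurableSet_Ioc] with s hs
    have hq := (quad_pos hc hs.1).2
    have h2 := rpow_le_rpow_of_nonpos (show 0 < 2 - 2 * |c| by linarith) hq
      (show -a ≤ 0 by linarith)
    have h3 : 0 ≤ (s + s⁻¹ - 2 * c) ^ (-a) := rpow_nonneg (by linarith) _
    have h4 : 0 ≤ s ^ (-a) := rpow_nonneg hs.1.le _
    rw [norm_eq_abs, kern, abs_le]; constructor <;> linarith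
  · have h1 : IntegrableOn (fun s : ℝ => 3 * a * ((1 - |c|) ^ (-a - 1) * s ^ (-a - 1))) (Ioi 1) :=
      ((integrableOn_Ioi_rpow_of_lt (by linarith) one_pos).const_mul _).const_mul _
    refine Integrable.mono' h1 hmeas.aestronglyMeasurable ?_
    filter_upwards [ae_restrict_mem measurableSet_Ioi] with s hs
    have hs : 1 < s := hs
    have hs0 : 0 < s := by linarith
    have hq := (quad_pos hc hs0).1
    set x := s + s⁻¹ - 2 * c with hx
    have hx0 : 0 < x := lt_of_lt_of_le (by positivity) hq
    have hi : s⁻¹ ≤ 1 := inv_le_one_of_one_le₀ hs.le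
    have hi0 : 0 < s⁻¹ := by positivity
    have hd3 : |x - s| ≤ 3 := by
      have := abs_le.1 hc.le
      rw [abs_le]; constructor <;> linarith
    have hM : x ^ (-a - 1) ≤ (1 - |c|) ^ (-a - 1) * s ^ (-a - 1) := by
      rw [← mul_rpow hd.le hs0.le]
      exact rpow_le_rpow_of_nonpos (by positivity) hq (by linarith)
    have hM' : s ^ (-a - 1) ≤ (1 - |c|) ^ (-a - 1) * s ^ (-a - 1) := by
      rw [← mul_rpow hd.le hs0.le]
      refine rpow_le_rpow_of_nonpos (by positivity) ?_ (by linarith)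
      nlinarith [abs_nonneg c]
    have t1 := rpow_neg_tangent ha hx0 hs0
    have t2 := rpow_neg_tangent ha hs0 hx0
    set M := (1 - |c|) ^ (-a - 1) * s ^ (-a - 1)
    have key : ∀ y d : ℝ, 0 ≤ y → y ≤ M → |d| ≤ 3 → a * y * d ≤ 3 * a * M := by
      intro y d hy hyM hd
      calc a * y * d ≤ a * y * 3 := by
            gcongr; exact (le_abs_self d).trans hd
        _ ≤ a * M * 3 := by gcongr
        _ = _ := by ring
    have k1 := key _ (x - s) (by positivity) hM' hd3
    have k2 := key _ (s - x) (by positivity) hM (by rw [abs_sub_comm]; exact hd3)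
    rw [norm_eq_abs, kern, abs_le]; constructor <;> linarith

/-! ### The pointwise bound on the sum of two powers -/

/-- Termwise comparison of power series: `a ^ (2 n) ≤ a ^ 2` for `n ≥ 1`. -/
lemma cosh_scale {a : ℝ} (ha : 0 ≤ a) (ha1 : a ≤ 1) (x : ℝ) :
    cosh (a * x) - 1 ≤ a ^ 2 * (cosh x - 1) := by
  have h1 := Real.hasSum_cosh (a * x)
  have h2 := ((Real.hasSum_cosh x).mul_left (a ^ 2)).add (hasSum_ite_eq (0:ℕ) (1 - a ^ 2))
  have := hasSum_le (fun n => ?_) h1 h2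
  · linarith
  · rcases n with _ | n
    · simp
    · simp only [Nat.add_eq_zero_iff, one_ne_zero, and_false, if_false, add_zero]
      rw [mul_pow, mul_div_assoc]
      have : a ^ (2 * (n + 1)) ≤ a ^ 2 := pow_le_pow_of_le_one ha ha1 (by omega)
      have h0 : 0 ≤ x ^ (2 * (n + 1)) / (Nat.factorial (2 * (n + 1)) : ℝ) :=
        div_nonneg (Even.pow_nonneg (by simp) x) (by positivity)
      exact mul_le_mul_of_nonneg_right this h0

/-- With `d = log (B / A) / 2` the left side is `2 (A B) ^ (-a/2) cosh (a d)`, and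
`cosh d ^ 2 = 1 + 3 / (A B)`. -/
lemma two_power_bound {a A B : ℝ} (ha : 0 ≤ a) (ha1 : a ≤ 1) (hA : 0 < A) (hB : 0 < B)
    (hAB : (B - A) ^ 2 = 12) :
    A ^ (-a) + B ^ (-a) ≤
      2 * (A * B) ^ (-(a / 2)) + 3 * a ^ 2 * (A * B) ^ (-(a / 2) - 1) := by
  set m := (log A + log B) / 2 with hm
  set d := (log B - log A) / 2 with hd
  have eA : A = exp (m - d) := by rw [hm, hd, ← exp_log hA]; simp; ring_nf
  have eB : B = exp (m + d) := by rw [hm, hd, ← exp_log hB]; simp; ring_nf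
  have eAB : A * B = exp (2 * m) := by rw [eA, eB, ← exp_add]; ring_nf
  have hsum : A + B = 2 * exp m * cosh d := by
    rw [eA, eB, cosh_eq, sub_eq_add_neg, exp_add, exp_add]; ring
  have hP : 0 < A * B := by positivity
  have hm2 : exp m ^ 2 = A * B := by rw [eAB, ← exp_nat_mul]; norm_num
  have hc2 : (cosh d) ^ 2 * (A * B) = A * B + 3 := by
    have : (A + B) ^ 2 = 12 + 4 * (A * B) := by rw [← hAB]; ring
    rw [hsum] at this
    rw [← hm2] at this ⊢; linarith
  have hcd : cosh d - 1 ≤ 3 / 2 / (A * B) := by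
    rw [le_div_iff₀ hP]
    nlinarith [one_le_cosh d, sq_nonneg (cosh d - 1)]
  have h1 : A ^ (-a) + B ^ (-a) = 2 * (A * B) ^ (-(a / 2)) * cosh (a * d) := by
    rw [eAB, ← exp_mul, eA, eB, ← exp_mul, ← exp_mul, cosh_eq,
      show (m - d) * -a = 2 * m * -(a / 2) + a * d by ring,
      show (m + d) * -a = 2 * m * -(a / 2) + -(a * d) by ring, exp_add, exp_add]
    ring
  have h2 := cosh_scale ha ha1 d
  have h3 : cosh (a * d) ≤ 1 + a ^ 2 * (3 / 2 / (A * B)) := by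
    have := mul_le_mul_of_nonneg_left hcd (sq_nonneg a)
    linarith
  rw [h1, rpow_sub_one hP.ne']
  have h4 : 0 < (A * B) ^ (-(a / 2)) := by positivity
  calc 2 * (A * B) ^ (-(a / 2)) * cosh (a * d)
      ≤ 2 * (A * B) ^ (-(a / 2)) * (1 + a ^ 2 * (3 / 2 / (A * B))) := by gcongr
    _ = _ := by ring

/-! ### The explicit primitive -/

/-- The sum of the kernels for `θ = π / 6` and `θ = 7 π / 6`. -/
noncomputable def pairKern (a s : ℝ) : ℝ := kern a (√3 / 2) s + kern a (-(√3 / 2)) s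

/-- The comparison primitive `w (1 + w²) ^ (-a/2) - s ^ (1 - a) + s ^ (a - 1)`, `w = s - 1/s`.
It is only meaningful for `s > 0`; for `0 < a < 1` its value at `s = 0` under the conventions
`0⁻¹ = 0` and `0 ^ (a - 1) = 0` is `0`, which is also its right limit there. -/
noncomputable def prim (a s : ℝ) : ℝ :=
  (s - s⁻¹) * (1 + (s - s⁻¹) ^ 2) ^ (-(a / 2)) - s ^ (1 - a) + s ^ (a - 1)

/-- The derivative of `prim a` on `(0, ∞)`. -/
noncomputable def primDeriv (a s : ℝ) : ℝ :=
  (1 + (s ^ 2)⁻¹) * ((1 - a) * (1 + (s - s⁻¹) ^ 2) ^ (-(a / 2)) +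
    a * (1 + (s - s⁻¹) ^ 2) ^ (-(a / 2) - 1)) - (1 - a) * (s ^ (-a) + s ^ (a - 2))

lemma hasDerivAt_prim (a : ℝ) {s : ℝ} (hs : 0 < s) :
    HasDerivAt (prim a) (primDeriv a s) s := by
  have hw : HasDerivAt (fun s : ℝ => s - s⁻¹) (1 - -(s ^ 2)⁻¹) s :=
    (hasDerivAt_id s).sub (hasDerivAt_inv hs.ne')
  have hpos : 0 < 1 + (s - s⁻¹) ^ 2 := by positivity
  have h1 := ((hw.pow 2).const_add 1).rpow_const (p := -(a / 2)) (Or.inl hpos.ne')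
  have h2 := hasDerivAt_rpow_const (x := s) (p := 1 - a) (Or.inl hs.ne')
  have h3 := hasDerivAt_rpow_const (x := s) (p := a - 1) (Or.inl hs.ne')
  convert! ((hw.mul h1).sub h2).add h3 using 1
  rw [primDeriv, show 1 - a - 1 = -a by ring, show a - 1 - 1 = a - 2 by ring]
  have h4 : (1 + (s - s⁻¹) ^ 2) ^ (-(a / 2)) =
      (1 + (s - s⁻¹) ^ 2) ^ (-(a / 2) - 1) * (1 + (s - s⁻¹) ^ 2) := by
    rw [rpow_sub_one hpos.ne']; field_simp
  simp only [h4, Pi.pow_apply]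
  push_cast
  ring

lemma prim_inv (a : ℝ) {s : ℝ} (hs : 0 < s) : prim a s⁻¹ = -prim a s := by
  have h1 : s⁻¹ ^ (1 - a) = s ^ (a - 1) := by
    rw [inv_rpow hs.le, ← rpow_neg hs.le]; congr 1; ring
  have h2 : s⁻¹ ^ (a - 1) = s ^ (1 - a) := by
    rw [inv_rpow hs.le, ← rpow_neg hs.le]; congr 1; ring
  rw [prim, prim, h1, h2, inv_inv, show (s⁻¹ - s) ^ 2 = (s - s⁻¹) ^ 2 by ring]
  ring

/-- For `s > 1` one has `w² ≤ 1 + w² ≤ s²`, which squeezes `prim a s` between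
`s ^ (a - 1) - s ^ (-(1 + a))` and `s ^ (a - 1)`. -/
lemma prim_tendsto_atTop {a : ℝ} (ha : 0 < a) (ha1 : a < 1) :
    Tendsto (prim a) atTop (𝓝 0) := by
  have l1 : Tendsto (fun s : ℝ => s ^ (a - 1)) atTop (𝓝 0) := by
    simpa using tendsto_rpow_neg_atTop (show 0 < 1 - a by linarith)
  have l2 : Tendsto (fun s : ℝ => s ^ (-(1 + a))) atTop (𝓝 0) :=
    tendsto_rpow_neg_atTop (by linarith)
  have l3 : Tendsto (fun s : ℝ => s ^ (a - 1) - s ^ (-(1 + a))) atTop (𝓝 0) := by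
    simpa using l1.sub l2
  refine tendsto_of_tendsto_of_tendsto_of_le_of_le' l3 l1 ?_ ?_
  · filter_upwards [eventually_gt_atTop 1] with s hs
    have hs0 : 0 < s := by linarith
    have hi : s⁻¹ < 1 := inv_lt_one_of_one_lt₀ hs
    have hi0 : 0 < s⁻¹ := by positivity
    have hss : s * s⁻¹ = 1 := mul_inv_cancel₀ hs0.ne'
    have h1 : 1 + (s - s⁻¹) ^ 2 ≤ s ^ 2 := by nlinarith
    have h2 : (s ^ 2) ^ (-(a / 2)) ≤ (1 + (s - s⁻¹) ^ 2) ^ (-(a / 2)) :=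
      rpow_le_rpow_of_nonpos (by positivity) h1 (by linarith)
    have h3 : (s ^ 2) ^ (-(a / 2)) = s ^ (-a) := by
      rw [← rpow_natCast, ← rpow_mul hs0.le]; congr 1; push_cast; ring
    rw [h3] at h2
    have h4 : (s - s⁻¹) * s ^ (-a) = s ^ (1 - a) - s ^ (-(1 + a)) := by
      rw [sub_mul, show (1 - a) = 1 + -a by ring, rpow_add hs0, rpow_one, ← rpow_neg_one,
        ← rpow_add hs0]; ring_nf
    have h5 := mul_le_mul_of_nonneg_left h2 (show 0 ≤ s - s⁻¹ by linarith)
    rw [prim]; linarith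
  · filter_upwards [eventually_gt_atTop 1] with s hs
    have hs0 : 0 < s := by linarith
    have hi : s⁻¹ < 1 := inv_lt_one_of_one_lt₀ hs
    have hi0 : 0 < s⁻¹ := by positivity
    set w := s - s⁻¹ with hw
    have hw0 : 0 < w := by linarith
    have h2 : (1 + w ^ 2) ^ (-(a / 2)) ≤ (w ^ 2) ^ (-(a / 2)) :=
      rpow_le_rpow_of_nonpos (by positivity) (by linarith) (by linarith)
    have h3 : (w ^ 2) ^ (-(a / 2)) = w ^ (-a) := by
      rw [← rpow_natCast, ← rpow_mul hw0.le]; congr 1; push_cast; ring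
    have h4 : w * w ^ (-a) = w ^ (1 - a) := by
      rw [show (1 - a) = 1 + -a by ring, rpow_add hw0, rpow_one]
    have h6 : w ^ (1 - a) ≤ s ^ (1 - a) :=
      rpow_le_rpow hw0.le (by linarith) (by linarith)
    have h5 := mul_le_mul_of_nonneg_left h2 hw0.le
    rw [h3, h4] at h5
    rw [prim, ← hw]; linarith

lemma prim_zero {a : ℝ} (ha1 : a < 1) : prim a 0 = 0 := by
  simp [prim, zero_rpow (show 1 - a ≠ 0 by linarith), zero_rpow (show a - 1 ≠ 0 by linarith)]

/-- Continuity at `0` is the limit at `∞`, since `prim a` is odd under `s ↦ s⁻¹`. -/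
lemma prim_continuousOn {a : ℝ} (ha : 0 < a) (ha1 : a < 1) : ContinuousOn (prim a) (Ici 0) := by
  intro s hs
  rcases eq_or_lt_of_le (show (0:ℝ) ≤ s from hs) with rfl | hs
  · rw [← continuousWithinAt_Ioi_iff_Ici, ContinuousWithinAt, prim_zero ha1]
    have h := ((prim_tendsto_atTop ha ha1).comp (tendsto_inv_nhdsGT_zero (𝕜 := ℝ))).neg
    rw [neg_zero] at h
    refine h.congr' ?_
    filter_upwards [self_mem_nhdsWithin] with s hs
    simp [prim_inv a (show 0 < s from hs)]
  · exact (hasDerivAt_prim a hs).continuousAt.continuousWithinAt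

/-! ### Folding by `s ↦ s⁻¹` and negativity -/

/-- The integrand `pairKern a` plus its transform under `s ↦ s⁻¹`, Jacobian included. -/
noncomputable def folded (a s : ℝ) : ℝ := pairKern a s + (s ^ 2)⁻¹ * pairKern a s⁻¹

/-- The key pointwise estimate. The remainder `(1 + s⁻²) (1 + w²) ^ (-a/2 - 1)` is replaced by its
lower bound `s / (1 + s²) ^ 2`, which has an elementary primitive. -/
lemma folded_bound {a s : ℝ} (ha : 0 < a) (ha1 : a < 1) (hs : 0 < s) :
    (1 - a) * folded a s ≤
      2 * primDeriv a s - a * (2 - 3 * a * (1 - a)) * (s / (1 + s ^ 2) ^ 2) := by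
  have h3 : √3 ^ 2 = 3 := sq_sqrt (by norm_num)
  have h30 : 0 ≤ √3 := sqrt_nonneg 3
  have h32 : √3 < 2 := by nlinarith
  have hc : |√3 / 2| < 1 := by rw [abs_of_nonneg (by positivity)]; linarith
  have hc' : |-(√3 / 2)| < 1 := by rwa [abs_neg]
  have hA0 := (quad_pos hc hs).2
  have hB0 := (quad_pos hc' hs).2
  set A := s + s⁻¹ - 2 * (√3 / 2) with hA
  set B := s + s⁻¹ - 2 * -(√3 / 2) with hB
  have hA0 : 0 < A := by linarith
  have hB0 : 0 < B := by linarith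
  have hss : s * s⁻¹ = 1 := mul_inv_cancel₀ hs.ne'
  have hi0 : 0 < s⁻¹ := by positivity
  have hAB : A * B = 1 + (s - s⁻¹) ^ 2 := by rw [hA, hB]; nlinarith
  have hd : (B - A) ^ 2 = 12 := by rw [hA, hB]; nlinarith
  have hψ := two_power_bound ha.le ha1.le hA0 hB0 hd
  rw [hAB] at hψ
  have e1 : pairKern a s = A ^ (-a) + B ^ (-a) - 2 * s ^ (-a) := by
    rw [pairKern, kern, kern]; ring
  have e2 : pairKern a s⁻¹ = A ^ (-a) + B ^ (-a) - 2 * s⁻¹ ^ (-a) := by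
    rw [pairKern, kern, kern, inv_inv, add_comm s⁻¹ s]; ring
  have e3 : (s ^ 2)⁻¹ * s⁻¹ ^ (-a) = s ^ (a - 2) := by
    rw [inv_rpow hs.le, ← rpow_neg hs.le, neg_neg, rpow_sub hs, rpow_two]; field_simp
  have e4 : folded a s = (1 + (s ^ 2)⁻¹) * (A ^ (-a) + B ^ (-a))
      - 2 * (s ^ (-a) + s ^ (a - 2)) := by
    rw [folded, e1, e2, ← e3]; ring
  set X := (1 + (s - s⁻¹) ^ 2) ^ (-(a / 2)) with hX
  set Y := (1 + (s - s⁻¹) ^ 2) ^ (-(a / 2) - 1) with hY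
  -- `1 + w² ≤ (s + s⁻¹)²`, `s + s⁻¹ ≥ 1` and `a ≤ 1` reduce the exponent to `-3`.
  have hv2 : 2 ≤ s + s⁻¹ := by nlinarith [sq_nonneg (s - 1), sq_nonneg (s - s⁻¹)]
  have hvY : (s + s⁻¹) ^ (-3 : ℝ) ≤ Y := by
    calc (s + s⁻¹) ^ (-3 : ℝ) ≤ (s + s⁻¹) ^ (2 * (-(a / 2) - 1)) :=
          rpow_le_rpow_of_exponent_le (by linarith) (by linarith)
      _ = ((s + s⁻¹) ^ 2) ^ (-(a / 2) - 1) := by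
          rw [rpow_mul (by linarith), rpow_two]
      _ ≤ Y := rpow_le_rpow_of_nonpos (by positivity) (by nlinarith) (by linarith)
  have hrem : s / (1 + s ^ 2) ^ 2 ≤ (1 + (s ^ 2)⁻¹) * Y := by
    have e5 : s / (1 + s ^ 2) ^ 2 = (1 + (s ^ 2)⁻¹) * (s + s⁻¹) ^ (-3 : ℝ) := by
      rw [rpow_neg (by positivity), show (3:ℝ) = (3:ℕ) by norm_num, rpow_natCast]
      have : s + s⁻¹ = (1 + s ^ 2) / s := by field_simp; ring
      rw [this]; field_simp; ring
    rw [e5]; gcongr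
  have hcpos : 0 ≤ a * (2 - 3 * a * (1 - a)) := by
    have : a * (1 - a) ≤ 1 / 4 := by nlinarith [sq_nonneg (a - 1 / 2)]
    exact mul_nonneg ha.le (by linarith)
  have f1 := mul_le_mul_of_nonneg_left hrem hcpos
  have f2 := mul_le_mul_of_nonneg_left hψ
    (show 0 ≤ (1 - a) * (1 + (s ^ 2)⁻¹) from mul_nonneg (by linarith) (by positivity))
  rw [e4, primDeriv, ← hX, ← hY]
  linarith

lemma pairKern_integrable {a : ℝ} (ha : 0 < a) (ha1 : a < 1) (hc : |√3 / 2| < 1) :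
    IntegrableOn (pairKern a) (Ioi 0) :=
  (kern_integrable ha ha1 hc).add (kern_integrable ha ha1 (by rwa [abs_neg]))

lemma rpow_neg_one_pieces (g : ℝ → ℝ) {s : ℝ} (hs : 0 < s) :
    (|(-1 : ℝ)| * s ^ ((-1 : ℝ) - 1)) • g (s ^ (-1 : ℝ)) = (s ^ 2)⁻¹ * g s⁻¹ := by
  rw [rpow_neg_one, show (-1 : ℝ) - 1 = -2 by norm_num, rpow_neg hs.le, rpow_two]
  simp

lemma pairKern_integral_neg {a : ℝ} (ha : 0 < a) (ha1 : a < 1) (hc : |√3 / 2| < 1) :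
    ∫ s in Ioi (0:ℝ), pairKern a s < 0 := by
  have hg := pairKern_integrable ha ha1 hc
  have hginv : IntegrableOn (fun s => (s ^ 2)⁻¹ * pairKern a s⁻¹) (Ioi 0) :=
    ((integrableOn_Ioi_comp_rpow_iff (pairKern a) (p := -1) (by norm_num)).2 hg).congr_fun
      (fun s hs => rpow_neg_one_pieces _ hs) measurableSet_Ioi
  have hinv : ∫ s in Ioi (0:ℝ), (s ^ 2)⁻¹ * pairKern a s⁻¹ = ∫ s in Ioi (0:ℝ), pairKern a s := by
    rw [← integral_comp_rpow_Ioi (pairKern a) (p := -1) (by norm_num)]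
    exact setIntegral_congr_fun measurableSet_Ioi fun s hs => (rpow_neg_one_pieces _ hs).symm
  have hF : IntegrableOn (folded a) (Ioi 0) := hg.add hginv
  have hF2 : ∫ s in Ioi (0:ℝ), folded a s = 2 * ∫ s in Ioi (0:ℝ), pairKern a s := by
    simp only [folded]
    rw [integral_add hg hginv, hinv]; ring
  set c := a * (2 - 3 * a * (1 - a)) with hcdef
  have hcpos : 0 < c := by
    have : a * (1 - a) ≤ 1 / 4 := by nlinarith [sq_nonneg (a - 1 / 2)]
    exact mul_pos ha (by linarith)
  -- `P` has the derivative bounding `(1 - a) * folded a`, and drops from `c / 2` to `0` on `[0, ∞)`.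
  let P : ℝ → ℝ := fun s => 2 * prim a s + c / 2 * (1 + s ^ 2)⁻¹
  have hPcont : ContinuousOn P (Ici 0) := by
    refine ((prim_continuousOn ha ha1).const_mul 2).add (Continuous.continuousOn ?_)
    exact continuous_const.mul ((by fun_prop : Continuous fun s : ℝ => 1 + s ^ 2).inv₀
      fun s => by positivity)
  have hPderiv : ∀ s : ℝ, 0 < s →
      HasDerivAt P (2 * primDeriv a s - c * (s / (1 + s ^ 2) ^ 2)) s := by
    intro s hs
    have h1 : HasDerivAt (fun s : ℝ => (1 + s ^ 2)⁻¹) (-(2 * s) / (1 + s ^ 2) ^ 2) s := by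
      have := ((hasDerivAt_pow 2 s).const_add 1).fun_inv (by positivity)
      simpa using this
    convert! ((hasDerivAt_prim a hs).const_mul 2).add (h1.const_mul (c / 2)) using 1
    ring
  have hPtop : Tendsto P atTop (𝓝 0) := by
    have h1 : Tendsto (fun s : ℝ => (1 + s ^ 2)⁻¹) atTop (𝓝 0) :=
      (tendsto_atTop_add_const_left _ 1 (tendsto_pow_atTop two_ne_zero)).inv_tendsto_atTop
    simpa using ((prim_tendsto_atTop ha ha1).const_mul 2).add (h1.const_mul (c / 2))
  have hP0 : P 0 = c / 2 := by simp [P, prim_zero ha1]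
  have hbound : ∀ R : ℝ, 0 ≤ R → ∫ s in (0:ℝ)..R, (1 - a) * folded a s ≤ P R - P 0 := by
    intro R hR
    refine intervalIntegral.integral_le_sub_of_hasDeriv_right_of_le hR
      (hPcont.mono Icc_subset_Ici_self)
      (fun s hs => (hPderiv s hs.1).hasDerivWithinAt) ?_
      (fun s hs => folded_bound ha ha1 hs.1)
    rw [integrableOn_Icc_iff_integrableOn_Ioc]
    exact (hF.mono_set Ioc_subset_Ioi_self).const_mul _
  have hlim := intervalIntegral_tendsto_integral_Ioi 0 (hF.const_mul (1 - a)) tendsto_id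
  have hle := le_of_tendsto_of_tendsto hlim (hPtop.sub_const (P 0))
    ((eventually_ge_atTop 0).mono fun R hR => hbound R hR)
  rw [integral_const_mul, hF2, hP0] at hle
  by_contra! hcon
  nlinarith

theorem phi_pi_six_sum_negative (α : ℝ) (hα : α ∈ Set.Ioo (0:ℝ) 2) :
    Phi α (π / 6) + Phi α (7 * π / 6) < 0 := by
  obtain ⟨h0, h2⟩ := hα
  have hcos : cos (7 * π / 6) = -(√3 / 2) := by
    rw [show 7 * π / 6 = π / 6 + π by ring, cos_add_pi, cos_pi_div_six]
  have hc : |√3 / 2| < 1 := by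
    rw [abs_of_nonneg (by positivity)]
    have : √3 < 2 := by rw [sqrt_lt' (by norm_num)]; norm_num
    linarith
  have hc' : |-(√3 / 2)| < 1 := by rwa [abs_neg]
  have ha : 0 < α / 2 := by linarith
  have ha1 : α / 2 < 1 := by linarith
  rw [phi_eq α _ h0 (by rwa [cos_pi_div_six]), phi_eq α _ h0 (by rwa [hcos]), cos_pi_div_six,
    hcos, ← mul_add, ← integral_add (kern_integrable ha ha1 hc) (kern_integrable ha ha1 hc')]
  exact mul_neg_of_pos_of_neg (by linarith) (pairKern_integral_neg ha ha1 hc)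
end
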